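/- (Main theorem) Assume the P^n are exponentially tight of order n, i.e. inf over compact K ⊆ S of limsup_{n→∞} P^n(S∖K)^{1/n} equals 0. Then there is a deviability density ρ on S such that: (1) ρ satisfies max balance, Φ_ρ(A',A'') = Φ_ρ(A'',A') for every nontrivial partition {A',A''} of A, together with the normalisation ρ(A) = sup_{a∈A} ρ(a) = 1, and these two requirements determine the restriction of ρ to A uniquely among deviability densities on S; (2) ρ(x) = Φ_ρ(A,x) = sup_{a∈A} ρ(a)·Π(a,x) for every x ∈ S; (3) the P^n LD converge at rate n to ρ. -/

import Mathlib

open Filter Topology Metric Set MeasureTheory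
open scoped NNReal

noncomputable section

/-- A deviability density on a topological space `E`. -/
def IsDeviabilityDensity {E : Type*} [TopologicalSpace E] (p : E → ℝ) : Prop :=
  (∀ x, p x ∈ Set.Icc (0:ℝ) 1) ∧ (⨆ x, p x) = 1 ∧
    ∀ γ ∈ Set.Ioc (0:ℝ) 1, IsCompact {x | γ ≤ p x}

variable {S : Type*} [MetricSpace S]

/-- Time shift `θ_s` on continuous paths. -/
def pshift (s : ℝ≥0) (X : C(ℝ≥0, S)) : C(ℝ≥0, S) :=
  ⟨fun t => X (s + t), X.continuous.comp (continuous_const.add continuous_id)⟩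

/-- `Π_{x,t}(y)`. -/
def transDen (Px : S → C(ℝ≥0, S) → ℝ) (x : S) (t : ℝ≥0) (y : S) : ℝ :=
  ⨆ X ∈ {X : C(ℝ≥0, S) | X t = y}, Px x X

/-- The standing assumptions (2.2)--(2.5) of the paper, together with the basic
assumptions on the family of path deviability densities `Px` and the set `A`. -/
structure DevSetup (S : Type*) [MetricSpace S] (Px : S → C(ℝ≥0, S) → ℝ) (A : Set S) :
    Prop where
  dev : ∀ x, IsDeviabilityDensity (Px x)
  start : ∀ x (X : C(ℝ≥0, S)), X 0 ≠ x → Px x X = 0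
  /-- (2.2) upper semicontinuity -/
  usc : UpperSemicontinuous (fun q : S × C(ℝ≥0, S) => Px q.1 q.2)
  /-- (2.2) uniform upper compactness -/
  cpt : ∀ K : Set S, IsCompact K → ∀ γ ∈ Set.Ioc (0:ℝ) 1,
    IsCompact (⋃ x ∈ K, {X : C(ℝ≥0, S) | γ ≤ Px x X})
  /-- (2.3) the maxitive Markov property -/
  markov : ∀ x (X : C(ℝ≥0, S)) (s : ℝ≥0),
    Px x X = (⨆ X' ∈ {X' : C(ℝ≥0, S) | ∀ u ≤ s, X' u = X u}, Px x X') *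
      Px (X s) (pshift s X)
  /-- (2.4) `A` is locally finite -/
  locFin : ∀ K : Set S, IsCompact K → (K ∩ A).Finite
  /-- (2.4)(i) -/
  attract : ∀ x (X : C(ℝ≥0, S)), Px x X = 1 → (⨅ t : ℝ≥0, infDist (X t) A) = 0
  /-- (2.4)(ii) -/
  equil : ∀ a ∈ A, Px a (ContinuousMap.const ℝ≥0 a) = 1
  /-- (2.4)(iii) -/
  connect : ∀ a ∈ A, ∀ a' ∈ A, ∃ t : ℝ≥0, 0 < t ∧ 0 < transDen Px a t a'
  /-- (2.4)(iv) -/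
  nearA : ∀ ε : ℝ, 0 < ε → ∃ δ : ℝ, 0 < δ ∧ ∀ x : S, infDist x A < δ →
    ∃ s₀ s₁ : ℝ≥0, 0 < s₀ ∧ 0 < s₁ ∧ ∃ a ∈ A,
      1 - ε < transDen Px x s₀ a ∧ 1 - ε < transDen Px a s₁ x
  /-- (2.4)(v) -/
  localMove : ∀ x : S, ∀ ε : ℝ, 0 < ε → ∃ δ : ℝ, 0 < δ ∧ ∃ t₀ t₁ : ℝ≥0,
    ∀ x' : S, dist x x' < δ →
      1 - ε < transDen Px x t₀ x' ∧ 1 - ε < transDen Px x' t₁ x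
  /-- (2.5) uniform tightness -/
  tight : ∀ K₁ : Set S, IsCompact K₁ → ∀ ε : ℝ, 0 < ε → ∃ K₂ : Set S, IsCompact K₂ ∧
    Filter.limsup (fun t : ℝ≥0 => ⨆ x ∈ K₁, ⨆ y ∈ K₂ᶜ, transDen Px x t y) atTop < ε

/-- LD convergence at the given rate of a sequence of Borel probability measures to a
deviability density. -/
def LDConv {E : Type*} [TopologicalSpace E] [MeasurableSpace E]
    (Q : ℕ → Measure E) (rate : ℕ → ℕ) (p : E → ℝ) : Prop :=
  ∀ f : E → ℝ, Continuous f → (∀ x, 0 ≤ f x) → BddAbove (Set.range f) →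
    Tendsto (fun n => (∫ x, (f x) ^ (rate n) ∂(Q n)) ^ ((rate n : ℝ)⁻¹)) atTop
      (𝓝 (⨆ x, f x * p x))


/-- The max flux `Φ_ρ(Γ,Γ')` relative to the limiting transition density `PL`. -/
def maxFlux (PL : S → S → ℝ) (ρ : S → ℝ) (Γ Γ' : Set S) : ℝ :=
  ⨆ x ∈ Γ, ρ x * ⨆ y ∈ Γ', PL x y

/-- `Φ_ρ(Γ, x)`, the max flux into a point. -/
def maxFluxPt (PL : S → S → ℝ) (ρ : S → ℝ) (Γ : Set S) (x : S) : ℝ :=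
  ⨆ a ∈ Γ, ρ a * PL a x

/-!
Along a nonprincipal ultrafilter every exponentially tight sequence has an LD limit, whose density
at `x` is the exponential rate of the masses of small neighbourhoods of `x`. Time invariance passes
to such a limit `ρ`: invariance bounds `ρ` from below and from above by the transition densities,
and the equality of the flows into and out of a set bounds one maxitive flux of `ρ` by the other.
A path charged by `ρ` stays in a compact superlevel set of `ρ`, so it soon comes close to `A`; since
points near `A` communicate with `A` at almost no cost, `ρ` is determined by its restriction to `A`,
and the flux bounds become max balance. Two max balanced densities with supremum one on `A` agree
there: otherwise balance fails for the partition of `A` according to the ratio of the two, because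
local finiteness of `A` makes the flux maximum attained. So the limits along all ultrafilters
coincide, which is convergence of the sequence itself.
-/

section RealBiSup

variable {α : Type*} {s t : Set α} {f : α → ℝ} {c M : ℝ}

lemma real_biSup_le (hc : 0 ≤ c) (h : ∀ x ∈ s, f x ≤ c) : ⨆ x ∈ s, f x ≤ c :=
  Real.iSup_le (fun x => Real.iSup_le (h x) hc) hc

lemma real_biSup_nonneg (h : ∀ x ∈ s, 0 ≤ f x) : 0 ≤ ⨆ x ∈ s, f x :=
  Real.iSup_nonneg fun x => Real.iSup_nonneg (h x)

lemma real_biSup_mem_Icc (h : ∀ x, f x ∈ Icc (0 : ℝ) 1) : ⨆ x ∈ s, f x ∈ Icc (0 : ℝ) 1 :=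
  ⟨real_biSup_nonneg fun x _ => (h x).1, real_biSup_le zero_le_one fun x _ => (h x).2⟩

lemma le_real_biSup (hM : ∀ x ∈ s, f x ≤ M) {x : α} (hx : x ∈ s) : f x ≤ ⨆ x ∈ s, f x := by
  have hbdd : BddAbove (range fun x => ⨆ _ : x ∈ s, f x) := by
    refine ⟨max M 0, forall_mem_range.2 fun y => ?_⟩
    exact Real.iSup_le (fun hy => (hM y hy).trans (le_max_left _ _)) (le_max_right _ _)
  simpa [hx] using le_ciSup hbdd x

lemma exists_lt_of_lt_real_biSup (hc : 0 ≤ c) (h : c < ⨆ x ∈ s, f x) : ∃ x ∈ s, c < f x := by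
  contrapose! h
  exact real_biSup_le hc h

lemma real_biSup_mono (hst : s ⊆ t) (h0 : ∀ x ∈ t, 0 ≤ f x) (hM : ∀ x ∈ t, f x ≤ M) :
    ⨆ x ∈ s, f x ≤ ⨆ x ∈ t, f x :=
  real_biSup_le (real_biSup_nonneg h0) fun _ hx => le_real_biSup hM (hst hx)

lemma real_biSup_mul_le {b : ℝ} (hb : 0 ≤ b) (hc : 0 ≤ c) (h : ∀ x ∈ s, f x * b ≤ c) :
    (⨆ x ∈ s, f x) * b ≤ c := by
  simp only [Real.iSup_mul_of_nonneg hb]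
  exact real_biSup_le hc h

lemma mul_real_biSup_le {b : ℝ} (hb : 0 ≤ b) (hc : 0 ≤ c) (h : ∀ x ∈ s, b * f x ≤ c) :
    b * (⨆ x ∈ s, f x) ≤ c := by
  simp only [Real.mul_iSup_of_nonneg hb]
  exact real_biSup_le hc h

lemma real_biSup_union (hs : ∀ x ∈ s, 0 ≤ f x) (ht : ∀ x ∈ t, 0 ≤ f x)
    (hsM : ∀ x ∈ s, f x ≤ M) (htM : ∀ x ∈ t, f x ≤ M) :
    ⨆ x ∈ s ∪ t, f x = max (⨆ x ∈ s, f x) (⨆ x ∈ t, f x) := by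
  have h0 : ∀ x ∈ s ∪ t, 0 ≤ f x := fun x hx => hx.elim (hs x) (ht x)
  have hM : ∀ x ∈ s ∪ t, f x ≤ M := fun x hx => hx.elim (hsM x) (htM x)
  refine le_antisymm (real_biSup_le (le_max_of_le_left (real_biSup_nonneg hs)) ?_)
    (max_le (real_biSup_mono subset_union_left h0 hM) (real_biSup_mono subset_union_right h0 hM))
  rintro x (hx | hx)
  · exact le_max_of_le_left (le_real_biSup hsM hx)
  · exact le_max_of_le_right (le_real_biSup htM hx)

lemma exists_mem_eq_real_biSup_of_finite (hfin : ∀ γ > 0, {x ∈ s | γ ≤ f x}.Finite)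
    (hpos : 0 < ⨆ x ∈ s, f x) : ∃ x ∈ s, f x = ⨆ x ∈ s, f x := by
  obtain ⟨γ, hγ0, hγ⟩ := exists_between hpos
  obtain ⟨x₀, hx₀, hγx₀⟩ := exists_lt_of_lt_real_biSup hγ0.le hγ
  obtain ⟨x, ⟨hxs, hγx⟩, hmax⟩ :=
    exists_max_image _ f (hfin γ hγ0) ⟨x₀, hx₀, hγx₀.le⟩
  have hle : ∀ y ∈ s, f y ≤ f x := fun y hy => (le_total γ (f y)).elim
    (fun h => hmax y ⟨hy, h⟩) fun h => h.trans hγx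
  exact ⟨x, hxs, (le_real_biSup hle hxs).antisymm (real_biSup_le (hγ0.le.trans hγx) hle)⟩

end RealBiSup

section PushDensity

variable {E F : Type*} {p : E → ℝ} {f : E → F}

/-- The image of the maxitive measure with density `p` under the map `f`. -/
def pushDensity (f : E → F) (p : E → ℝ) (y : F) : ℝ :=
  ⨆ x ∈ {x | f x = y}, p x

lemma pushDensity_nonneg (hp : ∀ x, 0 ≤ p x) (y : F) : 0 ≤ pushDensity f p y :=
  real_biSup_nonneg fun x _ => hp x

lemma pushDensity_le_one (hp : ∀ x, p x ≤ 1) (y : F) : pushDensity f p y ≤ 1 :=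
  real_biSup_le zero_le_one fun x _ => hp x

lemma le_pushDensity (hp : ∀ x, p x ≤ 1) (x : E) : p x ≤ pushDensity f p (f x) :=
  le_real_biSup (s := {x' | f x' = f x}) (fun x' _ => hp x') rfl

lemma setOf_le_pushDensity (hp : ∀ x, p x ≤ 1) {γ : ℝ} (hγ : 0 < γ) :
    {y | γ ≤ pushDensity f p y} = ⋂ c ∈ Ioo 0 γ, f '' {x | c ≤ p x} := by
  ext y
  simp only [mem_ofPred_eq, mem_iInter, mem_image]
  constructor
  · rintro hy c ⟨hc0, hcγ⟩
    obtain ⟨x, hxy, hx⟩ := exists_lt_of_lt_real_biSup hc0.le (hcγ.trans_le hy)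
    exact ⟨x, hx.le, hxy⟩
  · refine fun h => le_of_forall_lt_imp_le_of_dense fun c hc => ?_
    obtain ⟨x, hx, rfl⟩ := h (max c (γ / 2)) ⟨by positivity, max_lt hc (half_lt_self hγ)⟩
    exact (le_max_left _ _).trans (hx.trans (le_pushDensity hp x))

lemma iSup_mul_pushDensity (hp0 : ∀ x, 0 ≤ p x) (hp1 : ∀ x, p x ≤ 1) {g : F → ℝ}
    (hg0 : ∀ y, 0 ≤ g y) (hg : BddAbove (range g)) :
    ⨆ y, g y * pushDensity f p y = ⨆ x, g (f x) * p x := by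
  obtain ⟨M, hM⟩ := hg
  rw [mem_upperBounds, forall_mem_range] at hM
  have hmul : ∀ y, ∀ c, 0 ≤ c → c ≤ 1 → g y * c ≤ M := fun y c _ hc =>
    (mul_le_of_le_one_right (hg0 y) hc).trans (hM y)
  have hbddE : BddAbove (range fun x => g (f x) * p x) :=
    ⟨M, forall_mem_range.2 fun x => hmul _ _ (hp0 x) (hp1 x)⟩
  have hbddF : BddAbove (range fun y => g y * pushDensity f p y) := ⟨M, forall_mem_range.2
    fun y => hmul _ _ (pushDensity_nonneg hp0 y) (pushDensity_le_one hp1 y)⟩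
  have hnonneg : 0 ≤ ⨆ x, g (f x) * p x :=
    Real.iSup_nonneg fun x => mul_nonneg (hg0 _) (hp0 x)
  refine le_antisymm (Real.iSup_le (fun y => ?_) hnonneg) (Real.iSup_le (fun x => ?_) ?_)
  · refine mul_real_biSup_le (hg0 y) hnonneg ?_
    rintro x rfl
    exact le_ciSup hbddE x
  · exact (mul_le_mul_of_nonneg_left (le_pushDensity hp1 x) (hg0 _)).trans
      (le_ciSup hbddF (f x))
  · exact Real.iSup_nonneg fun y => mul_nonneg (hg0 y) (pushDensity_nonneg hp0 y)

end PushDensity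

section DeviabilityDensity

variable {E F : Type*} [TopologicalSpace E] [TopologicalSpace F] {p : E → ℝ} {f : E → F}

namespace IsDeviabilityDensity

lemma nonneg (hp : IsDeviabilityDensity p) (x : E) : 0 ≤ p x := (hp.1 x).1

lemma le_one (hp : IsDeviabilityDensity p) (x : E) : p x ≤ 1 := (hp.1 x).2

lemma isCompact_setOf_le (hp : IsDeviabilityDensity p) {γ : ℝ} (hγ : 0 < γ) :
    IsCompact {x | γ ≤ p x} := by
  rcases le_or_gt γ 1 with h1 | h1
  · exact hp.2.2 γ ⟨hγ, h1⟩
  · convert isCompact_empty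
    exact eq_empty_of_forall_notMem fun x hx => (h1.trans_le hx).not_ge (hp.le_one x)

lemma isClosed_setOf_le [T2Space E] (hp : IsDeviabilityDensity p) (γ : ℝ) :
    IsClosed {x | γ ≤ p x} := by
  rcases lt_or_ge 0 γ with h0 | h0
  · exact (hp.isCompact_setOf_le h0).isClosed
  · simp only [h0.trans (hp.nonneg _), ofPred_true, isClosed_univ]

lemma exists_lt (hp : IsDeviabilityDensity p) {c : ℝ} (hc : c < 1) : ∃ x, c < p x := by
  have : Nonempty E := by
    by_contra hE
    rw [not_nonempty_iff] at hE
    simpa using hp.2.1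
  exact exists_lt_of_lt_ciSup (hp.2.1 ▸ hc)

end IsDeviabilityDensity

lemma IsDeviabilityDensity.pushDensity [T2Space F] (hp : IsDeviabilityDensity p)
    (hf : Continuous f) : IsDeviabilityDensity (pushDensity f p) := by
  have hle_one := pushDensity_le_one (f := f) hp.le_one
  refine ⟨fun y => ⟨pushDensity_nonneg hp.nonneg y, hle_one y⟩, ?_, fun γ hγ => ?_⟩
  · refine (Real.iSup_le hle_one zero_le_one).antisymm ?_
    refine le_of_forall_lt_imp_le_of_dense fun c hc => ?_
    obtain ⟨x, hx⟩ := hp.exists_lt hc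
    exact hx.le.trans ((le_pushDensity hp.le_one x).trans
      (le_ciSup ⟨1, forall_mem_range.2 hle_one⟩ (f x)))
  · have himage : ∀ c > 0, IsCompact (f '' {x | c ≤ p x}) := fun c hc =>
      (hp.isCompact_setOf_le hc).image hf
    rw [setOf_le_pushDensity hp.le_one hγ.1]
    refine (himage (γ / 2) (half_pos hγ.1)).of_isClosed_subset
      (isClosed_biInter fun c hc => (himage c hc.1).isClosed) ?_
    exact biInter_subset_of_mem ⟨half_pos hγ.1, half_lt_self hγ.1⟩

end DeviabilityDensity

section LDConvergence

variable {E F : Type*} [TopologicalSpace E] [MeasurableSpace E]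
  [TopologicalSpace F] [MeasurableSpace F]

lemma LDConv.map [OpensMeasurableSpace E] [BorelSpace F] {Q : ℕ → Measure E} {rate : ℕ → ℕ}
    {p : E → ℝ} (hQ : LDConv Q rate p) (hp0 : ∀ x, 0 ≤ p x) (hp1 : ∀ x, p x ≤ 1) {f : E → F}
    (hf : Continuous f) : LDConv (fun n => (Q n).map f) rate (pushDensity f p) := by
  intro g hg hg0 hbdd
  rw [iSup_mul_pushDensity hp0 hp1 hg0 hbdd]
  have hmap : ∀ n, ∫ y, g y ^ rate n ∂(Q n).map f = ∫ x, (g ∘ f) x ^ rate n ∂Q n := fun n =>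
    integral_map hf.measurable.aemeasurable (hg.pow _).measurable.aestronglyMeasurable
  simp only [hmap]
  exact hQ (g ∘ f) (hg.comp hf) (fun x => hg0 _) (hbdd.mono (range_comp_subset_range f g))

section Roots

variable [OpensMeasurableSpace E] (μ : Measure E) [IsFiniteMeasure μ] {f : E → ℝ} {c : ℝ} {n : ℕ}

lemma ofReal_integral_pow (hf : Continuous f) (hf0 : ∀ x, 0 ≤ f x) (hbdd : BddAbove (range f))
    (n : ℕ) :
    ENNReal.ofReal (∫ x, f x ^ n ∂μ) = ∫⁻ x, ENNReal.ofReal (f x ^ n) ∂μ := by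
  obtain ⟨M, hM⟩ := hbdd
  refine ofReal_integral_eq_lintegral_ofReal ?_ (ae_of_all μ fun x => pow_nonneg (hf0 x) n)
  refine Integrable.of_bound (hf.pow n).measurable.aestronglyMeasurable (M ^ n)
    (ae_of_all μ fun x => ?_)
  rw [Real.norm_of_nonneg (pow_nonneg (hf0 x) n)]
  exact pow_le_pow_left₀ (hf0 x) (hM (mem_range_self x)) n

lemma root_integral_pow_le_iff (hf : Continuous f) (hf0 : ∀ x, 0 ≤ f x)
    (hbdd : BddAbove (range f)) (hc : 0 ≤ c) (hn : n ≠ 0) :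
    (∫ x, f x ^ n ∂μ) ^ ((n : ℝ)⁻¹) ≤ c ↔
      ∫⁻ x, ENNReal.ofReal (f x ^ n) ∂μ ≤ ENNReal.ofReal (c ^ n) := by
  have hint : 0 ≤ ∫ x, f x ^ n ∂μ := integral_nonneg fun x => pow_nonneg (hf0 x) n
  rw [← ofReal_integral_pow μ hf hf0 hbdd, ENNReal.ofReal_le_ofReal_iff (by positivity),
    Real.rpow_inv_le_iff_of_pos hint hc (by positivity), Real.rpow_natCast]

lemma le_root_integral_pow_iff (hf : Continuous f) (hf0 : ∀ x, 0 ≤ f x)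
    (hbdd : BddAbove (range f)) (hc : 0 ≤ c) (hn : n ≠ 0) :
    c ≤ (∫ x, f x ^ n ∂μ) ^ ((n : ℝ)⁻¹) ↔
      ENNReal.ofReal (c ^ n) ≤ ∫⁻ x, ENNReal.ofReal (f x ^ n) ∂μ := by
  have hint : 0 ≤ ∫ x, f x ^ n ∂μ := integral_nonneg fun x => pow_nonneg (hf0 x) n
  rw [← ofReal_integral_pow μ hf hf0 hbdd, ENNReal.ofReal_le_ofReal_iff hint,
    Real.le_rpow_inv_iff_of_pos hc hint (by positivity), Real.rpow_natCast]

end Roots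

section Portmanteau

variable [OpensMeasurableSpace E] {Q : ℕ → Measure E} [∀ n, IsFiniteMeasure (Q n)] {p : E → ℝ}
  {c : ℝ}

lemma LDConv.eventually_measure_le [T4Space E] (hQ : LDConv Q (fun n => n) p)
    (hp : IsDeviabilityDensity p) {C : Set E} (hC : IsClosed C) (hc : ⨆ x ∈ C, p x < c) :
    ∀ᶠ n in atTop, Q n C ≤ ENNReal.ofReal (c ^ n) := by
  obtain ⟨d, hd, hdc⟩ := exists_between hc
  have hd0 : 0 ≤ d := (real_biSup_nonneg fun x _ => hp.nonneg x).trans hd.le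
  have hdisj : Disjoint {x | d ≤ p x} C := disjoint_left.2 fun x hx hxC =>
    ((le_real_biSup (fun x _ => hp.le_one x) hxC).trans_lt hd).not_ge hx
  obtain ⟨f, hfd, hfC, hf01⟩ :=
    exists_continuous_zero_one_of_isClosed (hp.isClosed_setOf_le d) hC hdisj
  have hf0 : ∀ x, 0 ≤ f x := fun x => (hf01 x).1
  have hbdd : BddAbove (range f) := ⟨1, forall_mem_range.2 fun x => (hf01 x).2⟩
  have hsup : ⨆ x, f x * p x ≤ d := by
    refine Real.iSup_le (fun x => ?_) hd0
    rcases le_total d (p x) with hx | hx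
    · simpa [hfd hx] using hd0
    · exact (mul_le_of_le_one_left (hp.nonneg x) (hf01 x).2).trans hx
  filter_upwards [(hQ f f.continuous hf0 hbdd).eventually_lt_const (hsup.trans_lt hdc),
    eventually_ne_atTop 0] with n hn hn0
  calc Q n C = ∫⁻ x in C, ENNReal.ofReal (f x ^ n) ∂(Q n) := by
        rw [setLIntegral_congr_fun (g := 1) hC.measurableSet fun x hx => by simp [hfC hx]]
        simp only [Pi.one_apply, lintegral_const, one_mul, Measure.restrict_apply_univ]
    _ ≤ ∫⁻ x, ENNReal.ofReal (f x ^ n) ∂(Q n) := setLIntegral_le_lintegral _ _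
    _ ≤ ENNReal.ofReal (c ^ n) :=
        (root_integral_pow_le_iff _ f.continuous hf0 hbdd (hd0.trans hdc.le) hn0).1 hn.le

lemma LDConv.eventually_le_measure [CompletelyRegularSpace E] (hQ : LDConv Q (fun n => n) p)
    (hp : IsDeviabilityDensity p) {G : Set E} (hG : IsOpen G) {x : E} (hx : x ∈ G) (hc0 : 0 ≤ c)
    (hc : c < p x) : ∀ᶠ n in atTop, ENNReal.ofReal (c ^ n) ≤ Q n G := by
  obtain ⟨f, hf, hfx, hfG⟩ := CompletelyRegularSpace.completely_regular_isOpen x G hG hx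
  set g : E → ℝ := fun y => unitInterval.symm (f y)
  have hg : Continuous g := continuous_subtype_val.comp (unitInterval.continuous_symm.comp hf)
  have hg0 : ∀ y, 0 ≤ g y := fun y => unitInterval.nonneg _
  have hg1 : ∀ y, g y ≤ 1 := fun y => unitInterval.le_one _
  have hbdd : BddAbove (range g) := ⟨1, forall_mem_range.2 hg1⟩
  have hsup : c < ⨆ y, g y * p y := by
    have hle := le_ciSup (f := fun y => g y * p y) ⟨1, forall_mem_range.2 fun y =>
      mul_le_one₀ (hg1 y) (hp.nonneg y) (hp.le_one y)⟩ x
    have hgx : g x = 1 := by simp [g, hfx]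
    rw [hgx, one_mul] at hle
    exact hc.trans_le hle
  filter_upwards [(hQ _ hg hg0 hbdd).eventually_const_lt hsup,
    eventually_ne_atTop 0] with n hn hn0
  calc ENNReal.ofReal (c ^ n) ≤ ∫⁻ y, ENNReal.ofReal (g y ^ n) ∂(Q n) :=
        (le_root_integral_pow_iff _ hg hg0 hbdd hc0 hn0).1 hn.le
    _ ≤ ∫⁻ y, G.indicator 1 y ∂(Q n) := by
        refine lintegral_mono fun y => ?_
        by_cases hy : y ∈ G
        · simpa [hy] using pow_le_one₀ (hg0 y) (hg1 y)
        · simp [g, hy, hfG hy, hn0]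
    _ = Q n G := lintegral_indicator_one hG.measurableSet

end Portmanteau

end LDConvergence

section KernelLDConvergence

open ProbabilityTheory

lemma eventually_atTop_prod_nhds_of_forall_seq {X : Type*} [TopologicalSpace X]
    [FirstCountableTopology X] {x : X} {r : ℕ × X → Prop}
    (h : ∀ xs : ℕ → X, Tendsto xs atTop (𝓝 x) → ∀ᶠ n in atTop, r (n, xs n)) :
    ∀ᶠ z in atTop ×ˢ 𝓝 x, r z := by
  by_contra hr
  obtain ⟨z, hz, hzr⟩ := exists_seq_forall_of_frequently (not_eventually.1 hr)
  obtain ⟨φ, hφ, hmono⟩ := strictMono_subseq_of_tendsto_atTop (tendsto_fst.comp hz)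
  let index : ℕ → ℕ := fun k => (z (φ k)).1
  let point : ℕ → X := fun k => (z (φ k)).2
  have hindex : StrictMono index := hmono
  have hpoint : Tendsto point atTop (𝓝 x) := (tendsto_snd.comp hz).comp hφ.tendsto_atTop
  have hextend : Tendsto (Function.extend index point fun _ => x) atTop (𝓝 x) := by
    intro V hV
    obtain ⟨k₀, hk₀⟩ := eventually_atTop.1 (hpoint hV)
    refine eventually_atTop.2 ⟨index k₀, fun n hn => ?_⟩
    by_cases hex : ∃ k, index k = n
    · obtain ⟨k, rfl⟩ := hex
      simpa only [mem_preimage, hindex.injective.extend_apply] using hk₀ k (hindex.le_iff_le.1 hn)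
    · simpa only [mem_preimage, Function.extend_apply' _ _ _ hex] using mem_of_mem_nhds hV
  obtain ⟨k, hk⟩ := (hindex.tendsto_atTop.eventually (h _ hextend)).exists
  rw [hindex.injective.extend_apply] at hk
  exact hzr _ hk

variable {X E F : Type*} [TopologicalSpace X] [MeasurableSpace X] [TopologicalSpace E]
  [MeasurableSpace E] [TopologicalSpace F] [MeasurableSpace F]

/-- The kernels `κ n` LD converge at rate `n` to the densities `q x`, continuously in the starting
point: the hypothesis made on the path kernels in assumption 2.1 of the paper. -/
def KernelLDConv (κ : ℕ → Kernel X E) (q : X → E → ℝ) : Prop :=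
  ∀ (x : X) (xs : ℕ → X), Tendsto xs atTop (𝓝 x) →
    LDConv (fun n => κ n (xs n)) (fun n => n) (q x)

namespace KernelLDConv

variable {κ : ℕ → Kernel X E} {q : X → E → ℝ}

lemma map [OpensMeasurableSpace E] [BorelSpace F] (hκ : KernelLDConv κ q)
    (hq : ∀ x, IsDeviabilityDensity (q x)) {f : E → F} (hf : Continuous f) :
    KernelLDConv (fun n => (κ n).map f) fun x => pushDensity f (q x) := by
  intro x xs hxs
  simpa only [Kernel.map_apply _ hf.measurable] using
    (hκ x xs hxs).map (hq x).nonneg (hq x).le_one hf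

variable [FirstCountableTopology X] [OpensMeasurableSpace E] [∀ n, IsFiniteKernel (κ n)] {x : X}
  {c : ℝ}

lemma eventually_measure_le [T4Space E] (hκ : KernelLDConv κ q)
    (hq : IsDeviabilityDensity (q x)) {C : Set E} (hC : IsClosed C) (hc : ⨆ y ∈ C, q x y < c) :
    ∀ᶠ z in atTop ×ˢ 𝓝 x, κ z.1 z.2 C ≤ ENNReal.ofReal (c ^ z.1) :=
  eventually_atTop_prod_nhds_of_forall_seq fun xs hxs =>
    (hκ x xs hxs).eventually_measure_le hq hC hc

lemma eventually_le_measure [CompletelyRegularSpace E] (hκ : KernelLDConv κ q)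
    (hq : IsDeviabilityDensity (q x)) {G : Set E} (hG : IsOpen G) {y : E} (hy : y ∈ G)
    (hc0 : 0 ≤ c) (hc : c < q x y) :
    ∀ᶠ z in atTop ×ˢ 𝓝 x, ENNReal.ofReal (c ^ z.1) ≤ κ z.1 z.2 G :=
  eventually_atTop_prod_nhds_of_forall_seq fun xs hxs =>
    (hκ x xs hxs).eventually_le_measure hq hG hy hc0 hc

end KernelLDConv

end KernelLDConvergence

section LocalRate

variable {E : Type*} [TopologicalSpace E] [MeasurableSpace E]

/-- Exponential tightness of order `n` along the filter `l`. -/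
def IsExpTight (l : Filter ℕ) (P : ℕ → Measure E) : Prop :=
  ∀ η : ℝ, 0 < η → ∃ K : Set E, IsCompact K ∧ ∀ᶠ n in l, P n Kᶜ ≤ ENNReal.ofReal (η ^ n)

lemma IsExpTight.mono {l l' : Filter ℕ} {P : ℕ → Measure E} (h : IsExpTight l P) (hl : l' ≤ l) :
    IsExpTight l' P := fun η hη =>
  let ⟨K, hK, hPK⟩ := h η hη
  ⟨K, hK, hPK.filter_mono hl⟩

lemma isExpTight_of_limsup_lt {P : ℕ → Measure E} [∀ n, IsProbabilityMeasure (P n)]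
    (h : ∀ ε : ℝ, 0 < ε → ∃ K : Set E, IsCompact K ∧
      limsup (fun n => ((P n) Kᶜ).toReal ^ ((n : ℝ)⁻¹)) atTop < ε) : IsExpTight atTop P := by
  intro η hη
  obtain ⟨K, hK, hlim⟩ := h η hη
  refine ⟨K, hK, ?_⟩
  have hbdd : IsBoundedUnder (· ≤ ·) atTop fun n => ((P n) Kᶜ).toReal ^ ((n : ℝ)⁻¹) :=
    isBoundedUnder_of ⟨1, fun n => Real.rpow_le_one ENNReal.toReal_nonneg measureReal_le_one
      (by positivity)⟩
  filter_upwards [eventually_lt_of_limsup_lt hlim hbdd, eventually_ne_atTop 0] with n hn hn0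
  rw [← ENNReal.ofReal_toReal (measure_ne_top (P n) Kᶜ)]
  refine ENNReal.ofReal_le_ofReal ?_
  rw [← Real.rpow_natCast]
  exact (Real.rpow_inv_le_iff_of_pos ENNReal.toReal_nonneg hη.le (by positivity)).1 hn.le

/-- The exponential rate of `P n` at the point `x` along the ultrafilter `U`: the infimum of
`lim_U (P n V)^(1/n)` over the neighbourhoods `V` of `x`. It is the candidate for the LD limit of
`P` along `U`. -/
def localRate (U : Ultrafilter ℕ) (P : ℕ → Measure E) (x : E) : ℝ :=
  sInf {c | 0 ≤ c ∧ ∃ V ∈ 𝓝 x, ∀ᶠ n in U, P n V ≤ ENNReal.ofReal (c ^ n)}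

variable {U : Ultrafilter ℕ} {P : ℕ → Measure E} {x : E} {c d : ℝ}

lemma localRate_nonneg (U : Ultrafilter ℕ) (P : ℕ → Measure E) (x : E) : 0 ≤ localRate U P x :=
  Real.sInf_nonneg fun _ hc => hc.1

lemma localRate_le {V : Set E} (hc : 0 ≤ c) (hV : V ∈ 𝓝 x)
    (h : ∀ᶠ n in U, P n V ≤ ENNReal.ofReal (c ^ n)) : localRate U P x ≤ c :=
  csInf_le ⟨0, fun _ hc => hc.1⟩ ⟨hc, V, hV, h⟩

lemma eventually_le_measure_of_lt_localRate {V : Set E} (hc : 0 ≤ c) (h : c < localRate U P x)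
    (hV : V ∈ 𝓝 x) : ∀ᶠ n in U, ENNReal.ofReal (c ^ n) ≤ P n V := by
  by_contra hcon
  refine h.not_ge (localRate_le hc hV ?_)
  exact (Ultrafilter.eventually_not.2 hcon).mono fun n hn => (not_le.1 hn).le

lemma localRate_le_one [∀ n, IsProbabilityMeasure (P n)] (U : Ultrafilter ℕ) (x : E) :
    localRate U P x ≤ 1 :=
  localRate_le zero_le_one univ_mem (Eventually.of_forall fun n => by simp)

lemma exists_nhds_measure_le_of_localRate_lt [∀ n, IsProbabilityMeasure (P n)]
    (h : localRate U P x < c) : ∃ V ∈ 𝓝 x, ∀ᶠ n in U, P n V ≤ ENNReal.ofReal (c ^ n) := by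
  have hne : {c | 0 ≤ c ∧ ∃ V ∈ 𝓝 x, ∀ᶠ n in U, P n V ≤ ENNReal.ofReal (c ^ n)}.Nonempty :=
    ⟨1, zero_le_one, univ, univ_mem, Eventually.of_forall fun n => by simp⟩
  obtain ⟨b, ⟨hb0, V, hV, hb⟩, hbc⟩ := exists_lt_of_csInf_lt hne h
  exact ⟨V, hV, hb.mono fun n hn => hn.trans (by gcongr)⟩

lemma isClosed_setOf_le_localRate [∀ n, IsProbabilityMeasure (P n)] (γ : ℝ) :
    IsClosed {x | γ ≤ localRate U P x} := by
  rw [← isOpen_compl_iff, isOpen_iff_mem_nhds]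
  intro x hx
  rw [mem_compl_iff, mem_ofPred_eq, not_le] at hx
  obtain ⟨c, hxc, hcγ⟩ := exists_between hx
  obtain ⟨V, hV, hPV⟩ := exists_nhds_measure_le_of_localRate_lt hxc
  filter_upwards [eventually_mem_nhds_iff.2 hV] with y hy
  exact not_le.2 ((localRate_le ((localRate_nonneg U P x).trans hxc.le) hy hPV).trans_lt hcγ)

lemma IsExpTight.isCompact_setOf_le_localRate [T2Space E] [∀ n, IsProbabilityMeasure (P n)]
    (hP : IsExpTight (U : Filter ℕ) P) {γ : ℝ} (hγ : 0 < γ) :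
    IsCompact {x | γ ≤ localRate U P x} := by
  obtain ⟨K, hK, hPK⟩ := hP (γ / 2) (half_pos hγ)
  refine hK.of_isClosed_subset (isClosed_setOf_le_localRate γ) fun x hx => ?_
  by_contra hxK
  have hle := localRate_le (half_pos hγ).le (hK.isClosed.isOpen_compl.mem_nhds hxK) hPK
  exact (hle.trans_lt (half_lt_self hγ)).not_ge hx

end LocalRate

section Varadhan

variable {E : Type*} [MeasurableSpace E] {c d : ℝ}

lemma setLIntegral_le_ofReal_pow {μ : Measure E} {f : E → ENNReal} {V : Set E}
    (hV : MeasurableSet V) {p q b : ℝ} {n : ℕ} (hp : 0 ≤ p) (hq : 0 ≤ q) (hpq : p * q ≤ b)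
    (hμ : μ V ≤ ENNReal.ofReal (p ^ n)) (hf : ∀ x ∈ V, f x ≤ ENNReal.ofReal (q ^ n)) :
    ∫⁻ x in V, f x ∂μ ≤ ENNReal.ofReal (b ^ n) := by
  calc ∫⁻ x in V, f x ∂μ ≤ ∫⁻ _ in V, ENNReal.ofReal (q ^ n) ∂μ := setLIntegral_mono' hV hf
    _ = ENNReal.ofReal (q ^ n) * μ V := setLIntegral_const V _
    _ ≤ ENNReal.ofReal (q ^ n) * ENNReal.ofReal (p ^ n) := by gcongr
    _ = ENNReal.ofReal ((p * q) ^ n) := by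
        rw [← ENNReal.ofReal_mul (by positivity), mul_pow, mul_comm]
    _ ≤ ENNReal.ofReal (b ^ n) := by gcongr

lemma ofReal_pow_le_setLIntegral {μ : Measure E} {f : E → ENNReal} {V : Set E}
    (hV : MeasurableSet V) {p q : ℝ} {n : ℕ} (hp : 0 ≤ p)
    (hμ : ENNReal.ofReal (p ^ n) ≤ μ V) (hf : ∀ x ∈ V, ENNReal.ofReal (q ^ n) ≤ f x) :
    ENNReal.ofReal ((p * q) ^ n) ≤ ∫⁻ x in V, f x ∂μ := by
  calc ENNReal.ofReal ((p * q) ^ n) = ENNReal.ofReal (q ^ n) * ENNReal.ofReal (p ^ n) := by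
        rw [← ENNReal.ofReal_mul' (by positivity), mul_pow, mul_comm]
    _ ≤ ENNReal.ofReal (q ^ n) * μ V := by gcongr
    _ = ∫⁻ _ in V, ENNReal.ofReal (q ^ n) ∂μ := (setLIntegral_const V _).symm
    _ ≤ ∫⁻ x in V, f x ∂μ := setLIntegral_mono' hV hf

lemma eventually_add_one_mul_pow_le (k : ℕ) (hc : 0 < c) (hcd : c < d) :
    ∀ᶠ n : ℕ in atTop, ((k : ℝ) + 1) * c ^ n ≤ d ^ n := by
  filter_upwards [(tendsto_pow_atTop_atTop_of_one_lt ((one_lt_div hc).2 hcd)).eventually_ge_atTop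
    ((k : ℝ) + 1)] with n hn
  rwa [div_pow, le_div_iff₀ (by positivity)] at hn

variable [TopologicalSpace E] {U : Ultrafilter ℕ} {P : ℕ → Measure E} {g : ℕ → E → ENNReal}

lemma eventually_setLIntegral_le_of_isCompact {l : Filter ℕ} {K : Set E} (hK : IsCompact K) {b : ℝ}
    (h : ∀ x ∈ K, ∃ V ∈ 𝓝 x, ∀ᶠ n in l, ∫⁻ y in V, g n y ∂P n ≤ ENNReal.ofReal (b ^ n)) :
    ∃ k : ℕ, ∀ᶠ n in l, ∫⁻ y in K, g n y ∂P n ≤ k * ENNReal.ofReal (b ^ n) := by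
  refine hK.induction_on (p := fun s => ∃ k : ℕ, ∀ᶠ n in l,
    ∫⁻ y in s, g n y ∂P n ≤ k * ENNReal.ofReal (b ^ n)) ⟨0, by simp⟩ ?_ ?_ ?_
  · rintro s t hst ⟨k, hk⟩
    exact ⟨k, hk.mono fun n hn => (lintegral_mono_set hst).trans hn⟩
  · rintro s t ⟨k, hk⟩ ⟨j, hj⟩
    refine ⟨k + j, (hk.and hj).mono fun n hn => (lintegral_union_le _ s t).trans ?_⟩
    rw [Nat.cast_add, add_mul]
    exact add_le_add hn.1 hn.2
  · intro x hx
    obtain ⟨V, hV, hVg⟩ := h x hx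
    exact ⟨V, mem_nhdsWithin_of_mem_nhds hV, 1, by simpa using hVg⟩

variable [OpensMeasurableSpace E]

lemma exists_nhds_setLIntegral_le [∀ n, IsProbabilityMeasure (P n)] {x : E} {h b : ℝ}
    (h0 : 0 ≤ h)
    (hloc : ∀ d > h, ∀ᶠ z in (U : Filter ℕ) ×ˢ 𝓝 x, g z.1 z.2 ≤ ENNReal.ofReal (d ^ z.1))
    (hb : localRate U P x * h < b) :
    ∃ V ∈ 𝓝 x, ∀ᶠ n in U, ∫⁻ y in V, g n y ∂P n ≤ ENNReal.ofReal (b ^ n) := by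
  obtain ⟨p, hp, q, hq, hpq⟩ : ∃ p > localRate U P x, ∃ q > h, p * q < b := by
    contrapose! hb
    exact le_mul_of_forall_lt₀ hb
  obtain ⟨V, hV, hPV⟩ := exists_nhds_measure_le_of_localRate_lt hp
  obtain ⟨good, hgood, W, hW, hgW⟩ := eventually_prod_iff.1 (hloc q hq)
  obtain ⟨O, hOVW, hO, hxO⟩ := _root_.mem_nhds_iff.1 (inter_mem hV hW)
  refine ⟨O, hO.mem_nhds hxO, ?_⟩
  filter_upwards [hPV, hgood] with n hPn hgn
  exact setLIntegral_le_ofReal_pow hO.measurableSet ((localRate_nonneg U P x).trans hp.le)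
    (h0.trans hq.le) hpq.le ((measure_mono fun y hy => (hOVW hy).1).trans hPn)
    fun y hy => hgW hgn (hOVW hy).2

lemma IsExpTight.eventually_lintegral_le [T2Space E] [∀ n, IsProbabilityMeasure (P n)]
    (hU : (U : Filter ℕ) ≤ atTop) (hP : IsExpTight (U : Filter ℕ) P) {h : E → ℝ}
    (h0 : ∀ x, 0 ≤ h x) {M : ℝ} (hM : 0 < M) (hgM : ∀ n x, g n x ≤ ENNReal.ofReal (M ^ n))
    (hloc : ∀ x, ∀ d > h x, ∀ᶠ z in (U : Filter ℕ) ×ˢ 𝓝 x,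
      g z.1 z.2 ≤ ENNReal.ofReal (d ^ z.1))
    (hc0 : 0 ≤ c) (hc : ∀ x, localRate U P x * h x ≤ c) (hcd : c < d) :
    ∀ᶠ n in U, ∫⁻ x, g n x ∂P n ≤ ENNReal.ofReal (d ^ n) := by
  obtain ⟨b, hcb, hbd⟩ := exists_between hcd
  have hb : 0 < b := hc0.trans_lt hcb
  obtain ⟨K, hK, hPK⟩ := hP (b / M) (by positivity)
  obtain ⟨k, hk⟩ := eventually_setLIntegral_le_of_isCompact (l := U) hK fun x _ =>
    exists_nhds_setLIntegral_le (h0 x) (hloc x) ((hc x).trans_lt hcb)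
  filter_upwards [hk, hPK, hU (eventually_add_one_mul_pow_le k hb hbd)] with n hKn hPn hkn
  have hcompl : ∫⁻ x in Kᶜ, g n x ∂P n ≤ ENNReal.ofReal (b ^ n) :=
    setLIntegral_le_ofReal_pow hK.measurableSet.compl (by positivity) hM.le
      (div_mul_cancel₀ b hM.ne').le hPn fun x _ => hgM n x
  calc ∫⁻ x, g n x ∂P n = ∫⁻ x in K, g n x ∂P n + ∫⁻ x in Kᶜ, g n x ∂P n :=
        (lintegral_add_compl _ hK.measurableSet).symm
    _ ≤ k * ENNReal.ofReal (b ^ n) + ENNReal.ofReal (b ^ n) := add_le_add hKn hcompl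
    _ = ENNReal.ofReal (((k : ℝ) + 1) * b ^ n) := by
        rw [ENNReal.ofReal_mul (by positivity), ENNReal.ofReal_add (by positivity) zero_le_one,
          add_mul, ENNReal.ofReal_natCast, ENNReal.ofReal_one, one_mul]
    _ ≤ ENNReal.ofReal (d ^ n) := ENNReal.ofReal_le_ofReal hkn

lemma eventually_le_setLIntegral_of_lt_localRate_mul {V : Set E} (hV : IsOpen V) {x : E}
    (hx : x ∈ V) {h : ℝ}
    (hloc : ∀ b ≥ 0, b < h → ∀ᶠ z in (U : Filter ℕ) ×ˢ 𝓝 x,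
      ENNReal.ofReal (b ^ z.1) ≤ g z.1 z.2)
    (hc0 : 0 ≤ c) (hc : c < localRate U P x * h) :
    ∀ᶠ n in U, ENNReal.ofReal (c ^ n) ≤ ∫⁻ y in V, g n y ∂P n := by
  obtain ⟨p, hp0, hp, q, hq0, hq, hpq⟩ : ∃ p ≥ 0, p < localRate U P x ∧ ∃ q ≥ 0, q < h ∧
      c < p * q := by
    contrapose! hc
    exact mul_le_of_forall_lt_of_nonneg (localRate_nonneg U P x) hc0 hc
  obtain ⟨good, hgood, W, hW, hgW⟩ := eventually_prod_iff.1 (hloc q hq0 hq)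
  obtain ⟨O, hOVW, hO, hxO⟩ := _root_.mem_nhds_iff.1 (inter_mem (hV.mem_nhds hx) hW)
  filter_upwards [eventually_le_measure_of_lt_localRate hp0 hp (hO.mem_nhds hxO), hgood]
    with n hPn hgn
  calc ENNReal.ofReal (c ^ n) ≤ ENNReal.ofReal ((p * q) ^ n) := by gcongr
    _ ≤ ∫⁻ y in O, g n y ∂P n := ofReal_pow_le_setLIntegral hO.measurableSet hp0 hPn
        fun y hy => hgW hgn (hOVW hy).2
    _ ≤ ∫⁻ y in V, g n y ∂P n := lintegral_mono_set fun y hy => (hOVW hy).1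

end Varadhan

section UltrafilterLimit

variable {E : Type*} [TopologicalSpace E] {f : E → ℝ}

lemma eventually_prod_ofReal_pow_le (hf : Continuous f) (hf0 : ∀ x, 0 ≤ f x) (l : Filter ℕ)
    (x : E) {d : ℝ} (hd : f x < d) :
    ∀ᶠ z in l ×ˢ 𝓝 x, ENNReal.ofReal (f z.2 ^ z.1) ≤ ENNReal.ofReal (d ^ z.1) := by
  filter_upwards [((hf.tendsto x).comp tendsto_snd).eventually_lt_const hd] with z hz
  exact ENNReal.ofReal_le_ofReal (pow_le_pow_left₀ (hf0 _) hz.le _)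

lemma eventually_prod_le_ofReal_pow (hf : Continuous f) (l : Filter ℕ) (x : E) {b : ℝ}
    (hb0 : 0 ≤ b) (hb : b < f x) :
    ∀ᶠ z in l ×ˢ 𝓝 x, ENNReal.ofReal (b ^ z.1) ≤ ENNReal.ofReal (f z.2 ^ z.1) := by
  filter_upwards [((hf.tendsto x).comp tendsto_snd).eventually_const_lt hb] with z hz
  exact ENNReal.ofReal_le_ofReal (pow_le_pow_left₀ hb0 hz.le _)

variable [MeasurableSpace E] {U : Ultrafilter ℕ} {P : ℕ → Measure E}
  [∀ n, IsProbabilityMeasure (P n)]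

lemma localRate_mul_le_iSup (hf0 : ∀ x, 0 ≤ f x) (hbdd : BddAbove (range f)) (x : E) :
    localRate U P x * f x ≤ ⨆ x, f x * localRate U P x := by
  obtain ⟨M, hM⟩ := hbdd
  rw [mul_comm]
  exact le_ciSup (f := fun x => f x * localRate U P x) ⟨M, forall_mem_range.2 fun y =>
    (mul_le_of_le_one_right (hf0 y) (localRate_le_one U y)).trans (hM (mem_range_self y))⟩ x

variable [OpensMeasurableSpace E]

lemma IsExpTight.isDeviabilityDensity_localRate [T2Space E] (hU : (U : Filter ℕ) ≤ atTop)
    (hP : IsExpTight (U : Filter ℕ) P) : IsDeviabilityDensity (localRate U P) := by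
  have hle := localRate_le_one (P := P) U
  refine ⟨fun x => ⟨localRate_nonneg U P x, hle x⟩, ?_,
    fun γ hγ => hP.isCompact_setOf_le_localRate hγ.1⟩
  refine (Real.iSup_le hle zero_le_one).antisymm (not_lt.1 fun hsup => ?_)
  obtain ⟨d, hd, hd1⟩ := exists_between hsup
  have hd0 : 0 ≤ d := (Real.iSup_nonneg (localRate_nonneg U P)).trans hd.le
  have hmass : ∀ᶠ n in U, ∫⁻ _, 1 ∂P n ≤ ENNReal.ofReal (d ^ n) := by
    refine hP.eventually_lintegral_le hU (h := 1) (M := 1) (g := fun _ _ => 1)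
      (fun _ => zero_le_one) one_pos (by simp) (fun x b hb => ?_)
      (Real.iSup_nonneg (localRate_nonneg U P)) (fun x => ?_) hd
    · exact Eventually.of_forall fun z => ENNReal.one_le_ofReal.2 (one_le_pow₀ (le_of_lt hb))
    · rw [Pi.one_apply, mul_one]
      exact le_ciSup ⟨1, forall_mem_range.2 hle⟩ x
  obtain ⟨n, hn, hn0⟩ := (hmass.and ((eventually_ne_atTop 0).filter_mono hU)).exists
  rw [lintegral_const, measure_univ, one_mul, ENNReal.one_le_ofReal] at hn
  exact (pow_lt_one₀ hd0 hd1 hn0).not_ge hn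

lemma eventually_lt_root_integral_pow (hU : (U : Filter ℕ) ≤ atTop) (hf : Continuous f)
    (hf0 : ∀ x, 0 ≤ f x) (hbdd : BddAbove (range f)) {c : ℝ}
    (hc : c < ⨆ x, f x * localRate U P x) :
    ∀ᶠ n in U, c < (∫ x, f x ^ n ∂P n) ^ ((n : ℝ)⁻¹) := by
  obtain ⟨b, hcb, hb⟩ := exists_between hc
  rcases lt_or_ge b 0 with hb0 | hb0
  · exact Eventually.of_forall fun n => hcb.trans (hb0.trans_le
      (Real.rpow_nonneg (integral_nonneg fun x => pow_nonneg (hf0 x) n) _))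
  obtain ⟨x, -, hx⟩ := exists_lt_of_lt_real_biSup (s := univ) hb0 (by simpa using hb)
  filter_upwards [(eventually_ne_atTop 0).filter_mono hU,
    eventually_le_setLIntegral_of_lt_localRate_mul (P := P)
      (g := fun n x => ENNReal.ofReal (f x ^ n)) isOpen_univ (mem_univ x)
      (fun a ha0 ha => eventually_prod_le_ofReal_pow hf U x ha0 ha) hb0
      (by rwa [mul_comm] at hx)] with n hn0 hn
  rw [setLIntegral_univ] at hn
  exact hcb.trans_le ((le_root_integral_pow_iff (P n) hf hf0 hbdd hb0 hn0).2 hn)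

lemma IsExpTight.eventually_root_integral_pow_lt [T2Space E] (hU : (U : Filter ℕ) ≤ atTop)
    (hP : IsExpTight (U : Filter ℕ) P) (hf : Continuous f) (hf0 : ∀ x, 0 ≤ f x)
    (hbdd : BddAbove (range f)) {d : ℝ} (hd : ⨆ x, f x * localRate U P x < d) :
    ∀ᶠ n in U, (∫ x, f x ^ n ∂P n) ^ ((n : ℝ)⁻¹) < d := by
  obtain ⟨M, hM⟩ := id hbdd
  obtain ⟨b, hb, hbd⟩ := exists_between hd
  have hgM : ∀ (n : ℕ) x, ENNReal.ofReal (f x ^ n) ≤ ENNReal.ofReal (max M 1 ^ n) := fun n x =>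
    ENNReal.ofReal_le_ofReal (pow_le_pow_left₀ (hf0 x)
      ((hM (mem_range_self x)).trans (le_max_left _ _)) n)
  have hsup0 : 0 ≤ ⨆ x, f x * localRate U P x :=
    Real.iSup_nonneg fun x => mul_nonneg (hf0 x) (localRate_nonneg U P x)
  filter_upwards [(eventually_ne_atTop 0).filter_mono hU,
    hP.eventually_lintegral_le hU hf0 (by positivity) hgM
      (fun x a ha => eventually_prod_ofReal_pow_le hf hf0 U x ha) hsup0
      (localRate_mul_le_iSup hf0 hbdd) hb] with n hn0 hn
  exact ((root_integral_pow_le_iff (P n) hf hf0 hbdd (hsup0.trans hb.le) hn0).2 hn).trans_lt hbd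

lemma IsExpTight.tendsto_root_integral_pow [T2Space E] (hU : (U : Filter ℕ) ≤ atTop)
    (hP : IsExpTight (U : Filter ℕ) P) (hf : Continuous f) (hf0 : ∀ x, 0 ≤ f x)
    (hbdd : BddAbove (range f)) :
    Tendsto (fun n => (∫ x, f x ^ n ∂P n) ^ ((n : ℝ)⁻¹)) U
      (𝓝 (⨆ x, f x * localRate U P x)) :=
  tendsto_order.2 ⟨fun _ hc => eventually_lt_root_integral_pow hU hf hf0 hbdd hc,
    fun _ hd => hP.eventually_root_integral_pow_lt hU hf hf0 hbdd hd⟩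

lemma IsExpTight.ldConv_of_localRate_eq [T2Space E] (hP : IsExpTight atTop P) {ρ : E → ℝ}
    (hρ : ∀ U : Ultrafilter ℕ, (U : Filter ℕ) ≤ atTop → localRate U P = ρ) :
    LDConv P (fun n => n) ρ := fun f hf hf0 hbdd => by
  rw [tendsto_iff_ultrafilter]
  intro U hU
  rw [← hρ U hU]
  exact (hP.mono hU).tendsto_root_integral_pow hU hf hf0 hbdd

end UltrafilterLimit

section InvariantLimit

open ProbabilityTheory

variable {E : Type*} [MeasurableSpace E]

lemma measure_eq_lintegral_of_invariant {μ : Measure E} {η : Kernel E E} (h : η.Invariant μ)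
    {B : Set E} (hB : MeasurableSet B) : μ B = ∫⁻ x, η x B ∂μ := by
  conv_lhs => rw [← h.def]
  exact Measure.bind_apply hB η.aemeasurable

lemma setLIntegral_compl_eq_of_invariant {μ : Measure E} [IsProbabilityMeasure μ]
    {η : Kernel E E} [IsMarkovKernel η] (h : η.Invariant μ) {B : Set E} (hB : MeasurableSet B) :
    ∫⁻ x in Bᶜ, η x B ∂μ = ∫⁻ x in B, η x Bᶜ ∂μ := by
  have hinflow : μ B = ∫⁻ x in B, η x B ∂μ + ∫⁻ x in Bᶜ, η x B ∂μ := by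
    rw [lintegral_add_compl _ hB, measure_eq_lintegral_of_invariant h hB]
  have houtflow : μ B = ∫⁻ x in B, η x B ∂μ + ∫⁻ x in B, η x Bᶜ ∂μ := by
    rw [← lintegral_add_left (η.measurable_coe hB)]
    simp_rw [measure_add_measure_compl hB, measure_univ]
    rw [setLIntegral_one]
  have hfin : ∫⁻ x in B, η x B ∂μ ≠ ⊤ :=
    ne_top_of_le_ne_top (measure_ne_top μ B) (hinflow ▸ le_self_add)
  exact (ENNReal.add_right_inj hfin).1 (hinflow.symm.trans houtflow)

variable [TopologicalSpace E] [BorelSpace E] [T4Space E] [FirstCountableTopology E]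
  {U : Ultrafilter ℕ} {P : ℕ → Measure E} [∀ n, IsProbabilityMeasure (P n)]
  {κ : ℕ → Kernel E E} [∀ n, IsMarkovKernel (κ n)] {q : E → E → ℝ} {c : ℝ}

namespace KernelLDConv

lemma localRate_mul_le (hU : (U : Filter ℕ) ≤ atTop) (hκ : KernelLDConv κ q)
    (hq : ∀ x, IsDeviabilityDensity (q x)) (hinv : ∀ n, (κ n).Invariant (P n)) (x y : E) :
    localRate U P x * q x y ≤ localRate U P y := by
  by_contra! hlt
  obtain ⟨d, hyd, hd⟩ := exists_between hlt
  obtain ⟨c, hyc, hcd⟩ := exists_between hyd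
  have hc0 : 0 ≤ c := (localRate_nonneg U P y).trans hyc.le
  have hd0 : 0 ≤ d := hc0.trans hcd.le
  obtain ⟨V, hV, hPV⟩ := exists_nhds_measure_le_of_localRate_lt hyc
  obtain ⟨O, hOV, hO, hyO⟩ := _root_.mem_nhds_iff.1 hV
  have hlower := eventually_le_setLIntegral_of_lt_localRate_mul (P := P)
    (g := fun n x => κ n x O) isOpen_univ (mem_univ x) (fun b hb0 hb =>
      (hκ.eventually_le_measure (hq x) hO hyO hb0 hb).filter_mono (prod_mono_left _ hU)) hd0 hd
  obtain ⟨n, hn0, hnV, hnd⟩ :=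
    (((eventually_ne_atTop 0).filter_mono hU).and (hPV.and hlower)).exists
  rw [setLIntegral_univ, ← measure_eq_lintegral_of_invariant (hinv n) hO.measurableSet] at hnd
  have hpow := (ENNReal.ofReal_le_ofReal_iff (by positivity)).1
    (hnd.trans ((measure_mono hOV).trans hnV))
  exact (pow_lt_pow_left₀ hcd hc0 hn0).not_ge hpow

lemma localRate_le_of_forall_mul_le (hU : (U : Filter ℕ) ≤ atTop)
    (hP : IsExpTight (U : Filter ℕ) P) (hκ : KernelLDConv κ q)
    (hq : ∀ x, IsDeviabilityDensity (q x)) (hinv : ∀ n, (κ n).Invariant (P n)) {y : E}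
    {C : Set E} (hC : IsClosed C) (hyC : C ∈ 𝓝 y) (hc0 : 0 ≤ c)
    (hc : ∀ x, localRate U P x * ⨆ z ∈ C, q x z ≤ c) : localRate U P y ≤ c := by
  refine le_of_forall_gt_imp_ge_of_dense fun d hd => ?_
  refine localRate_le (hc0.trans hd.le) hyC ?_
  have hupper := hP.eventually_lintegral_le hU (g := fun n x => κ n x C) (M := 1)
    (fun x => real_biSup_nonneg fun z _ => (hq x).nonneg z) one_pos
    (fun n x => by simpa using prob_le_one) (fun x d hd =>
      (hκ.eventually_measure_le (hq x) hC hd).filter_mono (prod_mono_left _ hU)) hc0 hc hd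
  filter_upwards [hupper] with n hn
  rwa [measure_eq_lintegral_of_invariant (hinv n) hC.measurableSet]

lemma eventually_setLIntegral_compl_le (hU : (U : Filter ℕ) ≤ atTop)
    (hP : IsExpTight (U : Filter ℕ) P) (hκ : KernelLDConv κ q)
    (hq : ∀ x, IsDeviabilityDensity (q x)) {W : Set E} (hW : IsOpen W) (hc0 : 0 ≤ c)
    (hc : ∀ x ∈ closure W, ∀ y ∉ W, localRate U P x * q x y ≤ c) {d : ℝ} (hcd : c < d) :
    ∀ᶠ n in U, ∫⁻ x in W, κ n x Wᶜ ∂P n ≤ ENNReal.ofReal (d ^ n) := by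
  classical
  simp only [← lintegral_indicator hW.measurableSet]
  refine hP.eventually_lintegral_le hU (M := 1)
    (h := fun x => if x ∈ closure W then ⨆ y ∈ Wᶜ, q x y else 0) (fun x => ?_) one_pos
    (fun n x => ?_) (fun x b hb => ?_) hc0 (fun x => ?_) hcd
  · split_ifs
    exacts [real_biSup_nonneg fun y _ => (hq x).nonneg y, le_rfl]
  · simpa using (indicator_le_self W _ x).trans prob_le_one
  · split_ifs at hb with hx
    · filter_upwards [(hκ.eventually_measure_le (hq x) hW.isClosed_compl hb).filter_mono
        (prod_mono_left _ hU)] with z hz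
      exact (indicator_le_self W _ _).trans hz
    · filter_upwards [tendsto_snd.eventually (isClosed_closure.isOpen_compl.mem_nhds hx)]
        with z hz
      rw [indicator_of_notMem fun hzW => hz (subset_closure hzW)]
      exact zero_le
  · split_ifs with hx
    · exact mul_real_biSup_le (localRate_nonneg U P x) hc0 (hc x hx)
    · rwa [mul_zero]

lemma localRate_mul_le_of_flux_le (hU : (U : Filter ℕ) ≤ atTop)
    (hP : IsExpTight (U : Filter ℕ) P) (hκ : KernelLDConv κ q)
    (hq : ∀ x, IsDeviabilityDensity (q x)) (hinv : ∀ n, (κ n).Invariant (P n)) {W : Set E}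
    (hW : IsOpen W) (hc0 : 0 ≤ c)
    (hc : ∀ x ∈ closure W, ∀ y ∉ W, localRate U P x * q x y ≤ c) {a b : E}
    (ha : a ∉ closure W) (hb : b ∈ W) : localRate U P a * q a b ≤ c := by
  by_contra! hlt
  obtain ⟨e, hce, he⟩ := exists_between hlt
  obtain ⟨d, hcd, hde⟩ := exists_between hce
  have hd0 : 0 ≤ d := hc0.trans hcd.le
  have hinflow := eventually_le_setLIntegral_of_lt_localRate_mul (P := P)
    (g := fun n x => κ n x W) isClosed_closure.isOpen_compl ha (fun p hp0 hp =>
      (hκ.eventually_le_measure (hq a) hW hb hp0 hp).filter_mono (prod_mono_left _ hU))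
    (hd0.trans hde.le) he
  have houtflow := hκ.eventually_setLIntegral_compl_le hU hP hq hW hc0 hc hcd
  obtain ⟨n, hn0, hin, hout⟩ :=
    (((eventually_ne_atTop 0).filter_mono hU).and (hinflow.and houtflow)).exists
  rw [← setLIntegral_compl_eq_of_invariant (hinv n) hW.measurableSet] at hout
  have hpow := (ENNReal.ofReal_le_ofReal_iff (by positivity)).1
    (hin.trans ((lintegral_mono_set (compl_subset_compl.2 subset_closure)).trans hout))
  exact (pow_lt_pow_left₀ hde hd0 hn0).not_ge hpow

end KernelLDConv

end InvariantLimit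

section Paths

/-- The density of the event that a path from `x` follows `X` up to time `s`: the first factor in
the maxitive Markov property (2.3). -/
def segmentDen (Px : S → C(ℝ≥0, S) → ℝ) (x : S) (s : ℝ≥0) (X : C(ℝ≥0, S)) : ℝ :=
  ⨆ X' ∈ {X' : C(ℝ≥0, S) | ∀ u ≤ s, X' u = X u}, Px x X'

lemma pshift_zero (X : C(ℝ≥0, S)) : pshift 0 X = X :=
  ContinuousMap.ext fun t => congrArg X (zero_add t)

lemma pshift_pshift (s t : ℝ≥0) (X : C(ℝ≥0, S)) : pshift t (pshift s X) = pshift (s + t) X :=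
  ContinuousMap.ext fun u => congrArg X (add_assoc s t u).symm

/-- The path that follows `X` up to time `s` and `Y` afterwards. -/
def pconcat (s : ℝ≥0) (X Y : C(ℝ≥0, S)) (h : X s = Y 0) : C(ℝ≥0, S) where
  toFun u := if u ≤ s then X u else Y (u - s)
  continuous_toFun := by
    refine X.continuous.if_le (Y.continuous.comp (continuous_id.sub continuous_const))
      continuous_id continuous_const ?_
    rintro u rfl
    simpa using h

lemma pconcat_apply_of_le {s u : ℝ≥0} {X Y : C(ℝ≥0, S)} (h : X s = Y 0) (hu : u ≤ s) :
    pconcat s X Y h u = X u := if_pos hu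

lemma pshift_pconcat {s : ℝ≥0} {X Y : C(ℝ≥0, S)} (h : X s = Y 0) :
    pshift s (pconcat s X Y h) = Y := by
  ext u
  rcases eq_or_ne u 0 with rfl | hu
  · simpa [pshift, pconcat] using h
  · simp [pshift, pconcat, hu]

variable {Px : S → C(ℝ≥0, S) → ℝ} {A : Set S}

namespace DevSetup

lemma isDeviabilityDensity_transDen (hyp : DevSetup S Px A) (x : S) (t : ℝ≥0) :
    IsDeviabilityDensity (transDen Px x t) :=
  (hyp.dev x).pushDensity (continuous_eval_const t)

lemma le_transDen (hyp : DevSetup S Px A) (x : S) (t : ℝ≥0) (X : C(ℝ≥0, S)) :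
    Px x X ≤ transDen Px x t (X t) :=
  le_pushDensity (f := fun X : C(ℝ≥0, S) => X t) (hyp.dev x).le_one X

lemma apply_zero_eq (hyp : DevSetup S Px A) {x : S} {X : C(ℝ≥0, S)} (h : 0 < Px x X) :
    X 0 = x :=
  not_imp_comm.1 (hyp.start x X) h.ne'

lemma eq_segmentDen_mul (hyp : DevSetup S Px A) (x : S) (s : ℝ≥0) (X : C(ℝ≥0, S)) :
    Px x X = segmentDen Px x s X * Px (X s) (pshift s X) :=
  hyp.markov x X s

lemma le_segmentDen (hyp : DevSetup S Px A) {x : S} {s : ℝ≥0} {X X' : C(ℝ≥0, S)}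
    (h : ∀ u ≤ s, X' u = X u) : Px x X' ≤ segmentDen Px x s X :=
  le_real_biSup (s := {X' : C(ℝ≥0, S) | ∀ u ≤ s, X' u = X u})
    (fun X' _ => (hyp.dev x).le_one X') h

lemma segmentDen_le_transDen (hyp : DevSetup S Px A) (x : S) (s : ℝ≥0) (X : C(ℝ≥0, S)) :
    segmentDen Px x s X ≤ transDen Px x s (X s) := by
  refine real_biSup_le ((hyp.isDeviabilityDensity_transDen x s).nonneg _) fun X' hX' => ?_
  rw [← hX' s le_rfl]
  exact hyp.le_transDen x s X'

lemma le_transDen_mul_transDen (hyp : DevSetup S Px A) (x : S) (X : C(ℝ≥0, S)) {s t : ℝ≥0}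
    (hst : s ≤ t) : Px x X ≤ transDen Px x s (X s) * transDen Px (X s) (t - s) (X t) := by
  have hrest := hyp.le_transDen (X s) (t - s) (pshift s X)
  rw [show pshift s X (t - s) = X t from congrArg X (add_tsub_cancel_of_le hst)] at hrest
  rw [hyp.eq_segmentDen_mul x s X]
  exact mul_le_mul (hyp.segmentDen_le_transDen x s X) hrest ((hyp.dev _).nonneg _)
    ((hyp.isDeviabilityDensity_transDen x s).nonneg _)

lemma mul_le_pconcat (hyp : DevSetup S Px A) (x : S) {s : ℝ≥0} {X Y : C(ℝ≥0, S)}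
    (h : X s = Y 0) : Px x X * Px (X s) Y ≤ Px x (pconcat s X Y h) := by
  rw [hyp.eq_segmentDen_mul x s (pconcat s X Y h), pshift_pconcat, pconcat_apply_of_le h le_rfl]
  exact mul_le_mul_of_nonneg_right
    (hyp.le_segmentDen fun u hu => (pconcat_apply_of_le h hu).symm) ((hyp.dev _).nonneg Y)

lemma transDen_mul_transDen_le (hyp : DevSetup S Px A) (x y z : S) (s t : ℝ≥0) :
    transDen Px x s y * transDen Px y t z ≤ transDen Px x (s + t) z := by
  have hT0 := (hyp.isDeviabilityDensity_transDen x (s + t)).nonneg z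
  refine real_biSup_mul_le ((hyp.isDeviabilityDensity_transDen y t).nonneg z) hT0 ?_
  rintro X rfl
  refine mul_real_biSup_le ((hyp.dev x).nonneg X) hT0 ?_
  rintro Y rfl
  rcases ((hyp.dev (X s)).nonneg Y).eq_or_lt with hY | hY
  · rwa [← hY, mul_zero]
  have hstart := (hyp.apply_zero_eq hY).symm
  have hend : pconcat s X Y hstart (s + t) = Y t := by
    conv_rhs => rw [← pshift_pconcat hstart]
    rfl
  rw [← hend]
  exact (hyp.mul_le_pconcat x hstart).trans (hyp.le_transDen x (s + t) _)

lemma transDen_self (hyp : DevSetup S Px A) {a : S} (ha : a ∈ A) (t : ℝ≥0) :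
    transDen Px a t a = 1 := by
  refine ((hyp.isDeviabilityDensity_transDen a t).le_one a).antisymm ?_
  rw [← hyp.equil a ha]
  exact hyp.le_transDen a t (ContinuousMap.const ℝ≥0 a)

lemma le_pow_of_segmentDen_le (hyp : DevSetup S Px A) {q : ℝ} (hq : 0 ≤ q) (L : ℝ≥0) (N : ℕ) :
    ∀ X : C(ℝ≥0, S), (∀ k < N, segmentDen Px (X (k * L)) L (pshift (k * L) X) ≤ q) →
      Px (X 0) X ≤ q ^ N := by
  induction N with
  | zero => exact fun X _ => (hyp.dev _).le_one X
  | succ N ih =>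
    intro X hX
    have hfirst : segmentDen Px (X 0) L X ≤ q := by
      simpa only [Nat.cast_zero, zero_mul, pshift_zero] using hX 0 N.succ_pos
    have hrest : Px (pshift L X 0) (pshift L X) ≤ q ^ N := ih (pshift L X) fun k hk => by
      have hnext := hX (k + 1) (Nat.succ_lt_succ hk)
      rw [Nat.cast_succ, add_one_mul, add_comm] at hnext
      rwa [pshift_pshift]
    rw [show pshift L X 0 = X L from congrArg X (add_zero L)] at hrest
    rw [hyp.eq_segmentDen_mul (X 0) L X, pow_succ']
    exact mul_le_mul hfirst hrest ((hyp.dev _).nonneg _) hq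

lemma exists_time_infDist_lt (hyp : DevSetup S Px A) {K : Set S} (hK : IsCompact K) {δ : ℝ}
    (hδ : 0 < δ) : ∃ L : ℝ≥0, ∃ c ∈ Ioo (0 : ℝ) 1, ∀ X : C(ℝ≥0, S), X 0 ∈ K → c < Px (X 0) X →
      ∃ t ≤ L, infDist (X t) A < δ := by
  by_contra! hcon
  obtain ⟨c, hcmono, hc, hclim⟩ := exists_seq_strictMono_tendsto' (one_half_lt_one (α := ℝ))
  let F : ℕ → Set C(ℝ≥0, S) := fun n =>
    {X | X 0 ∈ K} ∩ {X | c n ≤ Px (X 0) X} ∩ ⋂ t ∈ Iic (n : ℝ≥0), {X | δ ≤ infDist (X t) A}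
  have hF : ∀ n, IsClosed (F n) := fun n => by
    refine ((hK.isClosed.preimage (continuous_eval_const 0)).inter ?_).inter
      (isClosed_biInter fun t _ => ?_)
    · exact (hyp.usc.isClosed_preimage (c n)).preimage
        ((continuous_eval_const 0).prodMk continuous_id)
    · exact isClosed_le continuous_const
        ((continuous_infDist_pt A).comp (continuous_eval_const t))
  have hF0 : IsCompact (F 0) := by
    refine (hyp.cpt K hK (1 / 2) (by norm_num)).of_isClosed_subset (hF 0) ?_
    exact fun X hX => mem_biUnion hX.1.1 ((hc 0).1.le.trans hX.1.2)
  have hanti : ∀ n, F (n + 1) ⊆ F n := fun n X hX => by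
    refine ⟨⟨hX.1.1, (hcmono n.lt_succ_self).le.trans hX.1.2⟩, ?_⟩
    exact biInter_subset_biInter_left (Iic_subset_Iic.2 (Nat.cast_le.2 n.le_succ)) hX.2
  have hne : ∀ n, (F n).Nonempty := fun n => by
    obtain ⟨X, hXK, hX, hXA⟩ := hcon n (c n) ⟨one_half_pos.trans (hc n).1, (hc n).2⟩
    exact ⟨X, ⟨hXK, hX.le⟩, mem_iInter₂.2 hXA⟩
  obtain ⟨Y, hY⟩ :=
    IsCompact.nonempty_iInter_of_sequence_nonempty_isCompact_isClosed F hanti hne hF0 hF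
  rw [mem_iInter] at hY
  have hYfar : ∀ t, δ ≤ infDist (Y t) A := fun t =>
    let ⟨n, hn⟩ := exists_nat_ge t
    mem_iInter₂.1 (hY n).2 t hn
  have hYone : Px (Y 0) Y = 1 :=
    ((hyp.dev _).le_one Y).antisymm (le_of_tendsto' hclim fun n => (hY n).1.2)
  exact (hδ.trans_le (le_ciInf hYfar)).ne' (hyp.attract _ Y hYone)

lemma exists_time_infDist_lt_of_mem (hyp : DevSetup S Px A) {K : Set S} (hK : IsCompact K)
    {δ γ : ℝ} (hδ : 0 < δ) (hγ : 0 < γ) :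
    ∃ t₀ : ℝ≥0, ∀ X : C(ℝ≥0, S), γ < Px (X 0) X → (∀ t ≤ t₀, X t ∈ K) →
      ∃ t ≤ t₀, infDist (X t) A < δ := by
  obtain ⟨L, c, ⟨hc0, hc1⟩, hL⟩ := hyp.exists_time_infDist_lt hK hδ
  obtain ⟨N, hN⟩ := exists_pow_lt_of_lt_one hγ hc1
  refine ⟨N * L, fun X hX hXK => ?_⟩
  by_contra! hfar
  refine (hN.trans hX).not_ge (hyp.le_pow_of_segmentDen_le hc0.le L N X fun k hk => ?_)
  have htime : ∀ u ≤ L, k * L + u ≤ N * L := fun u hu => by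
    calc k * L + u ≤ ((k + 1 : ℕ) : ℝ≥0) * L := by push_cast; rw [add_one_mul]; gcongr
      _ ≤ N * L := by gcongr; exact hk
  refine real_biSup_le hc0.le fun X' hX' => le_of_not_gt fun hcX' => ?_
  have hX'0 := hyp.apply_zero_eq (hc0.trans hcX')
  obtain ⟨u, huL, hu⟩ := hL X'
    (hX'0 ▸ hXK _ ((le_add_of_nonneg_right zero_le).trans (htime 0 zero_le))) (hX'0 ▸ hcX')
  rw [hX' u huL] at hu
  exact (hfar _ (htime u huL)).not_gt hu

end DevSetup

end Paths

section MaxBalance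

variable {V : Type*} {PL : V → V → ℝ} {A Γ Γ' : Set V} {ρ ρ' : V → ℝ} {c : ℝ}

lemma maxFlux_nonneg (hPL : ∀ x y, PL x y ∈ Icc (0 : ℝ) 1) (hρ : ∀ x, ρ x ∈ Icc (0 : ℝ) 1) :
    0 ≤ maxFlux PL ρ Γ Γ' :=
  real_biSup_nonneg fun x _ => mul_nonneg (hρ x).1 (real_biSup_mem_Icc (hPL x)).1

lemma maxFlux_le (hρ : ∀ x, ρ x ∈ Icc (0 : ℝ) 1) (hc : 0 ≤ c)
    (h : ∀ x ∈ Γ, ∀ y ∈ Γ', ρ x * PL x y ≤ c) : maxFlux PL ρ Γ Γ' ≤ c :=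
  real_biSup_le hc fun x hx => mul_real_biSup_le (hρ x).1 hc (h x hx)

lemma mul_iSup_le_maxFlux (hPL : ∀ x y, PL x y ∈ Icc (0 : ℝ) 1)
    (hρ : ∀ x, ρ x ∈ Icc (0 : ℝ) 1) {x : V} (hx : x ∈ Γ) :
    ρ x * ⨆ y ∈ Γ', PL x y ≤ maxFlux PL ρ Γ Γ' :=
  le_real_biSup (f := fun x => ρ x * ⨆ y ∈ Γ', PL x y) (fun x _ => mul_le_one₀ (hρ x).2
    (real_biSup_mem_Icc (hPL x)).1 (real_biSup_mem_Icc (hPL x)).2) hx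

lemma mul_le_maxFlux (hPL : ∀ x y, PL x y ∈ Icc (0 : ℝ) 1) (hρ : ∀ x, ρ x ∈ Icc (0 : ℝ) 1)
    {x y : V} (hx : x ∈ Γ) (hy : y ∈ Γ') : ρ x * PL x y ≤ maxFlux PL ρ Γ Γ' :=
  (mul_le_mul_of_nonneg_left (le_real_biSup (fun y _ => (hPL x y).2) hy) (hρ x).1).trans
    (mul_iSup_le_maxFlux hPL hρ hx)

lemma maxFluxPt_mem_Icc (hPL : ∀ x y, PL x y ∈ Icc (0 : ℝ) 1) (hρ : ∀ x, ρ x ∈ Icc (0 : ℝ) 1)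
    (y : V) : maxFluxPt PL ρ Γ y ∈ Icc (0 : ℝ) 1 :=
  real_biSup_mem_Icc fun x => ⟨mul_nonneg (hρ x).1 (hPL x y).1,
    mul_le_one₀ (hρ x).2 (hPL x y).1 (hPL x y).2⟩

lemma mul_le_maxFluxPt (hPL : ∀ x y, PL x y ∈ Icc (0 : ℝ) 1) (hρ : ∀ x, ρ x ∈ Icc (0 : ℝ) 1)
    {x : V} (hx : x ∈ Γ) (y : V) : ρ x * PL x y ≤ maxFluxPt PL ρ Γ y :=
  le_real_biSup (f := fun x => ρ x * PL x y)
    (fun x _ => mul_le_one₀ (hρ x).2 (hPL x y).1 (hPL x y).2) hx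

/-- Max balance: the max fluxes across every nontrivial partition of `A` agree. -/
def IsMaxBalanced (PL : V → V → ℝ) (A : Set V) (ρ : V → ℝ) : Prop :=
  ∀ A' A'' : Set V, A'.Nonempty → A''.Nonempty → Disjoint A' A'' → A' ∪ A'' = A →
    maxFlux PL ρ A' A'' = maxFlux PL ρ A'' A'

namespace IsMaxBalanced

lemma maxFlux_sep_eq (h : IsMaxBalanced PL A ρ) {r : V → Prop} {a b : V} (ha : a ∈ A)
    (hra : r a) (hb : b ∈ A) (hrb : ¬r b) :
    maxFlux PL ρ {x ∈ A | r x} {x ∈ A | ¬r x} = maxFlux PL ρ {x ∈ A | ¬r x} {x ∈ A | r x} :=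
  h _ _ ⟨a, ha, hra⟩ ⟨b, hb, hrb⟩ (disjoint_left.2 fun _ hx hx' => hx'.2 hx.2)
    (by ext x; simp only [mem_union, mem_ofPred_eq]; tauto)

lemma pos (h : IsMaxBalanced PL A ρ) (hPL : ∀ x y, PL x y ∈ Icc (0 : ℝ) 1)
    (hpos : ∀ a ∈ A, ∀ b ∈ A, 0 < PL a b) (hρ : ∀ x, ρ x ∈ Icc (0 : ℝ) 1)
    (hnorm : ⨆ a ∈ A, ρ a = 1) {b : V} (hb : b ∈ A) : 0 < ρ b := by
  by_contra hb0
  obtain ⟨a, ha, ha0⟩ := exists_lt_of_lt_real_biSup le_rfl (hnorm ▸ one_pos)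
  have hout := mul_le_maxFlux (Γ := {x ∈ A | 0 < ρ x}) (Γ' := {x ∈ A | ¬0 < ρ x}) hPL hρ
    ⟨ha, ha0⟩ ⟨hb, hb0⟩
  have hin : maxFlux PL ρ {x ∈ A | ¬0 < ρ x} {x ∈ A | 0 < ρ x} ≤ 0 :=
    maxFlux_le hρ le_rfl fun x hx y _ => mul_nonpos_of_nonpos_of_nonneg (not_lt.1 hx.2)
      (hPL x y).1
  rw [h.maxFlux_sep_eq ha ha0 hb hb0] at hout
  exact (mul_pos ha0 (hpos a ha b hb)).not_ge (hout.trans hin)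

lemma mul_le_mul_swap (h : IsMaxBalanced PL A ρ) (h' : IsMaxBalanced PL A ρ')
    (hPL : ∀ x y, PL x y ∈ Icc (0 : ℝ) 1) (hpos : ∀ a ∈ A, ∀ b ∈ A, 0 < PL a b)
    (hρ : ∀ x, ρ x ∈ Icc (0 : ℝ) 1) (hρ' : ∀ x, ρ' x ∈ Icc (0 : ℝ) 1)
    (hρ'pos : ∀ a ∈ A, 0 < ρ' a) (hfin : ∀ γ > 0, {a ∈ A | γ ≤ ρ' a}.Finite) {a b : V}
    (ha : a ∈ A) (hb : b ∈ A) : ρ a * ρ' b ≤ ρ b * ρ' a := by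
  by_contra! hab
  have hbb : ¬ρ b * ρ' b < ρ b * ρ' b := lt_irrefl _
  set A' : Set V := {x ∈ A | ρ b * ρ' x < ρ x * ρ' b}
  set A'' : Set V := {x ∈ A | ¬ρ b * ρ' x < ρ x * ρ' b}
  have hbal : maxFlux PL ρ A' A'' = maxFlux PL ρ A'' A' := h.maxFlux_sep_eq ha hab hb hbb
  have hbal' : maxFlux PL ρ' A' A'' = maxFlux PL ρ' A'' A' := h'.maxFlux_sep_eq ha hab hb hbb
  have hflux_pos : 0 < maxFlux PL ρ' A' A'' :=
    (mul_pos (hρ'pos a ha) (hpos a ha b hb)).trans_le (mul_le_maxFlux hPL hρ' ⟨ha, hab⟩ ⟨hb, hbb⟩)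
  obtain ⟨s, hs, hmax⟩ : ∃ s ∈ A', ρ' s * ⨆ y ∈ A'', PL s y = maxFlux PL ρ' A' A'' := by
    refine exists_mem_eq_real_biSup_of_finite (fun γ hγ => (hfin γ hγ).subset ?_) hflux_pos
    exact fun x hx => ⟨hx.1.1, hx.2.trans
      (mul_le_of_le_one_right (hρ' x).1 (real_biSup_mem_Icc (hPL x)).2)⟩
  have hexit : 0 < ⨆ y ∈ A'', PL s y := pos_of_mul_pos_right (hmax ▸ hflux_pos) (hρ' s).1
  have hout : ρ b * maxFlux PL ρ' A' A'' < ρ' b * maxFlux PL ρ A' A'' := by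
    rw [← hmax]
    calc ρ b * (ρ' s * ⨆ y ∈ A'', PL s y) < ρ' b * (ρ s * ⨆ y ∈ A'', PL s y) := by
          rw [← mul_assoc, ← mul_assoc, mul_comm (ρ' b)]
          exact mul_lt_mul_of_pos_right hs.2 hexit
      _ ≤ ρ' b * maxFlux PL ρ A' A'' :=
          mul_le_mul_of_nonneg_left (mul_iSup_le_maxFlux hPL hρ hs) (hρ' b).1
  have hin : ρ' b * maxFlux PL ρ A'' A' ≤ ρ b * maxFlux PL ρ' A'' A' := by
    refine mul_real_biSup_le (hρ' b).1 (mul_nonneg (hρ b).1 (maxFlux_nonneg hPL hρ')) fun x hx => ?_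
    calc ρ' b * (ρ x * ⨆ y ∈ A', PL x y) ≤ ρ b * (ρ' x * ⨆ y ∈ A', PL x y) := by
          rw [← mul_assoc, ← mul_assoc, mul_comm (ρ' b)]
          exact mul_le_mul_of_nonneg_right (not_lt.1 hx.2) (real_biSup_mem_Icc (hPL x)).1
      _ ≤ ρ b * maxFlux PL ρ' A'' A' :=
          mul_le_mul_of_nonneg_left (mul_iSup_le_maxFlux hPL hρ' hx) (hρ b).1
  rw [hbal, hbal'] at hout
  exact hout.not_ge hin

lemma le (h : IsMaxBalanced PL A ρ) (h' : IsMaxBalanced PL A ρ')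
    (hPL : ∀ x y, PL x y ∈ Icc (0 : ℝ) 1) (hpos : ∀ a ∈ A, ∀ b ∈ A, 0 < PL a b)
    (hρ : ∀ x, ρ x ∈ Icc (0 : ℝ) 1) (hρ' : ∀ x, ρ' x ∈ Icc (0 : ℝ) 1)
    (hnorm' : ⨆ a ∈ A, ρ' a = 1) (hfin : ∀ γ > 0, {a ∈ A | γ ≤ ρ' a}.Finite) {a : V}
    (ha : a ∈ A) : ρ a ≤ ρ' a := by
  have hρ'pos : ∀ b ∈ A, 0 < ρ' b := fun b => h'.pos hPL hpos hρ' hnorm'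
  have hle : (⨆ b ∈ A, ρ' b) * ρ a ≤ ρ' a := real_biSup_mul_le (hρ a).1 (hρ' a).1 fun b hb => by
    rw [mul_comm]
    exact (h.mul_le_mul_swap h' hPL hpos hρ hρ' hρ'pos hfin ha hb).trans
      (mul_le_of_le_one_left (hρ' a).1 (hρ b).2)
  rwa [hnorm', one_mul] at hle

end IsMaxBalanced

end MaxBalance

section LimitDensity

variable {Px : S → C(ℝ≥0, S) → ℝ} {PL : S → S → ℝ} {A : Set S} {ρ : S → ℝ}

/-- `PL` is the long-time limit `Π(x, y) = lim_t Π_{x,t}(y)` of the transition densities. -/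
def IsLimitDensity (Px : S → C(ℝ≥0, S) → ℝ) (PL : S → S → ℝ) : Prop :=
  ∀ x y : S, Tendsto (fun t : ℝ≥0 => transDen Px x t y) atTop (𝓝 (PL x y))

namespace IsLimitDensity

lemma mem_Icc (hPL : IsLimitDensity Px PL) (hyp : DevSetup S Px A) (x y : S) :
    PL x y ∈ Icc (0 : ℝ) 1 :=
  isClosed_Icc.mem_of_tendsto (hPL x y)
    (Eventually.of_forall fun t => (hyp.isDeviabilityDensity_transDen x t).1 y)

lemma transDen_mul_le (hPL : IsLimitDensity Px PL) (hyp : DevSetup S Px A) (x z y : S)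
    (s : ℝ≥0) : transDen Px x s z * PL z y ≤ PL x y :=
  le_of_tendsto_of_tendsto' ((hPL z y).const_mul _)
    ((hPL x y).comp (tendsto_atTop_mono (fun _ => le_add_self) tendsto_id))
    fun t => hyp.transDen_mul_transDen_le x z y s t

lemma mul_transDen_le (hPL : IsLimitDensity Px PL) (hyp : DevSetup S Px A) (x z y : S)
    (s : ℝ≥0) : PL x z * transDen Px z s y ≤ PL x y :=
  le_of_tendsto_of_tendsto' ((hPL x z).mul_const _)
    ((hPL x y).comp (tendsto_atTop_mono (fun _ => le_self_add) tendsto_id))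
    fun t => hyp.transDen_mul_transDen_le x z y t s

lemma mul_le (hPL : IsLimitDensity Px PL) (hyp : DevSetup S Px A) (x z y : S) :
    PL x z * PL z y ≤ PL x y :=
  le_of_tendsto' ((hPL z y).const_mul _) (hPL.mul_transDen_le hyp x z y)

lemma self_eq_one (hPL : IsLimitDensity Px PL) (hyp : DevSetup S Px A) {a : S} (ha : a ∈ A) :
    PL a a = 1 :=
  tendsto_nhds_unique (hPL a a) (by simp only [hyp.transDen_self ha, tendsto_const_nhds])

lemma transDen_le_of_mem_right (hPL : IsLimitDensity Px PL) (hyp : DevSetup S Px A) {a : S}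
    (ha : a ∈ A) (x : S) (t : ℝ≥0) : transDen Px x t a ≤ PL x a := by
  simpa only [hPL.self_eq_one hyp ha, mul_one] using hPL.transDen_mul_le hyp x a a t

lemma transDen_le_of_mem_left (hPL : IsLimitDensity Px PL) (hyp : DevSetup S Px A) {a : S}
    (ha : a ∈ A) (y : S) (t : ℝ≥0) : transDen Px a t y ≤ PL a y := by
  simpa only [hPL.self_eq_one hyp ha, one_mul] using hPL.mul_transDen_le hyp a a y t

lemma pos (hPL : IsLimitDensity Px PL) (hyp : DevSetup S Px A) {a b : S} (ha : a ∈ A)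
    (hb : b ∈ A) : 0 < PL a b :=
  let ⟨t, _, ht⟩ := hyp.connect a ha b hb
  ht.trans_le (hPL.transDen_le_of_mem_right hyp hb a t)

lemma exists_mem_mul_transDen_le (hPL : IsLimitDensity Px PL) (hyp : DevSetup S Px A) {r : ℝ}
    (hr : r < 1) : ∃ δ > 0, ∀ z, infDist z A < δ → ∃ a ∈ A,
      (∀ x s, transDen Px x s z * r ≤ PL x a) ∧ ∀ y t, r * transDen Px z t y ≤ PL a y := by
  obtain ⟨δ, hδ, hnear⟩ := hyp.nearA (1 - r) (sub_pos.2 hr)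
  refine ⟨δ, hδ, fun z hz => ?_⟩
  obtain ⟨s₀, s₁, -, -, a, ha, hza, haz⟩ := hnear z hz
  rw [sub_sub_cancel] at hza haz
  refine ⟨a, ha, fun x s => ?_, fun y t => ?_⟩
  · calc transDen Px x s z * r ≤ transDen Px x s z * transDen Px z s₀ a :=
          mul_le_mul_of_nonneg_left hza.le ((hyp.isDeviabilityDensity_transDen x s).nonneg z)
      _ ≤ transDen Px x (s + s₀) a := hyp.transDen_mul_transDen_le x z a s s₀
      _ ≤ PL x a := hPL.transDen_le_of_mem_right hyp ha x _
  · calc r * transDen Px z t y ≤ transDen Px a s₁ z * transDen Px z t y :=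
          mul_le_mul_of_nonneg_right haz.le ((hyp.isDeviabilityDensity_transDen z t).nonneg y)
      _ ≤ transDen Px a (s₁ + t) y := hyp.transDen_mul_transDen_le a z y s₁ t
      _ ≤ PL a y := hPL.transDen_le_of_mem_left hyp ha y _

lemma iSup_mem_eq_one (hPL : IsLimitDensity Px PL) (hyp : DevSetup S Px A) (x : S) :
    ⨆ a ∈ A, PL x a = 1 := by
  refine (real_biSup_mem_Icc (hPL.mem_Icc hyp x)).2.antisymm ?_
  refine le_of_forall_lt_imp_le_of_dense fun c hc => ?_
  obtain ⟨r, hcr, hr1⟩ : ∃ r, √c < r ∧ r < 1 :=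
    exists_between ((Real.sqrt_lt' one_pos).2 (by rwa [one_pow]))
  have hr0 : 0 < r := (Real.sqrt_nonneg c).trans_lt hcr
  obtain ⟨δ, hδ, hnear⟩ := hPL.exists_mem_mul_transDen_le hyp hr1
  obtain ⟨L, c', hc', hvisit⟩ := hyp.exists_time_infDist_lt (isCompact_singleton (x := x)) hδ
  obtain ⟨X, hX⟩ := (hyp.dev x).exists_lt (max_lt hc'.2 hr1)
  obtain ⟨hX', hXr⟩ := max_lt_iff.1 hX
  have hX0 : X 0 = x := hyp.apply_zero_eq (hr0.trans hXr)
  obtain ⟨s, -, hs⟩ := hvisit X hX0 (by rwa [hX0])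
  obtain ⟨a, ha, hto, -⟩ := hnear (X s) hs
  calc c ≤ r * r := (sq r ▸ Real.lt_sq_of_sqrt_lt hcr).le
    _ ≤ transDen Px x s (X s) * r :=
        mul_le_mul_of_nonneg_right (hXr.le.trans (hyp.le_transDen x s X)) hr0.le
    _ ≤ PL x a := hto x s
    _ ≤ ⨆ a ∈ A, PL x a := le_real_biSup (fun a _ => (hPL.mem_Icc hyp x a).2) ha

lemma maxFluxPt_mul_iSup_le (hPL : IsLimitDensity Px PL) (hyp : DevSetup S Px A)
    (hρ : ∀ x, ρ x ∈ Icc (0 : ℝ) 1) (Γ Γ' : Set S) (x : S) :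
    maxFluxPt PL ρ Γ x * ⨆ b ∈ Γ', PL x b ≤ maxFlux PL ρ Γ Γ' := by
  have hI := hPL.mem_Icc hyp
  have hflux : 0 ≤ maxFlux PL ρ Γ Γ' := maxFlux_nonneg hI hρ
  refine mul_real_biSup_le (maxFluxPt_mem_Icc hI hρ x).1 hflux fun b hb => ?_
  refine real_biSup_mul_le (hI x b).1 hflux fun a ha => ?_
  rw [mul_assoc]
  exact (mul_le_mul_of_nonneg_left (hPL.mul_le hyp a x b) (hρ a).1).trans
    (mul_le_maxFlux hI hρ ha hb)

lemma eventually_mul_le (hPL : IsLimitDensity Px PL) (hyp : DevSetup S Px A) (x : S) {r : ℝ}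
    (hr : r < 1) : ∀ᶠ x' in 𝓝 x, ∀ a, PL a x * r ≤ PL a x' ∧ PL a x' * r ≤ PL a x := by
  obtain ⟨δ, hδ, t₀, t₁, hmove⟩ := hyp.localMove x (1 - r) (sub_pos.2 hr)
  rw [sub_sub_cancel] at hmove
  filter_upwards [Metric.ball_mem_nhds x hδ] with x' hx' a
  rw [mem_ball'] at hx'
  exact ⟨(mul_le_mul_of_nonneg_left (hmove x' hx').1.le (hPL.mem_Icc hyp a x).1).trans
      (hPL.mul_transDen_le hyp a x x' t₀),
    (mul_le_mul_of_nonneg_left (hmove x' hx').2.le (hPL.mem_Icc hyp a x').1).trans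
      (hPL.mul_transDen_le hyp a x' x t₁)⟩

lemma continuous_maxFluxPt (hPL : IsLimitDensity Px PL) (hyp : DevSetup S Px A)
    (hρ : ∀ x, ρ x ∈ Icc (0 : ℝ) 1) (Γ : Set S) : Continuous (maxFluxPt PL ρ Γ) := by
  have hψ := maxFluxPt_mem_Icc (Γ := Γ) (hPL.mem_Icc hyp) hρ
  have hmul : ∀ {x x' : S} {r : ℝ}, 0 ≤ r → (∀ a, PL a x * r ≤ PL a x') →
      maxFluxPt PL ρ Γ x * r ≤ maxFluxPt PL ρ Γ x' := fun {x x' r} hr h =>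
    real_biSup_mul_le hr (hψ x').1 fun a ha => by
      rw [mul_assoc]
      exact (mul_le_mul_of_nonneg_left (h a) (hρ a).1).trans
        (mul_le_maxFluxPt (hPL.mem_Icc hyp) hρ ha x')
  refine continuous_iff_continuousAt.2 fun x => Metric.tendsto_nhds.2 fun ε hε => ?_
  obtain ⟨r, hr, hr1⟩ : ∃ r, max 0 (1 - ε) < r ∧ r < 1 :=
    exists_between (max_lt one_pos (sub_lt_self _ hε))
  obtain ⟨hr0, hrε⟩ := max_lt_iff.1 hr
  filter_upwards [hPL.eventually_mul_le hyp x hr1] with x' hx'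
  have hup := hmul hr0.le fun a => (hx' a).1
  have hdown := hmul hr0.le fun a => (hx' a).2
  rw [Real.dist_eq, abs_lt]
  constructor <;> nlinarith [(hψ x).1, (hψ x).2, (hψ x').1, (hψ x').2]

end IsLimitDensity

end LimitDensity

section StationaryDensity

variable {Px : S → C(ℝ≥0, S) → ℝ} {PL : S → S → ℝ} {A Γ Γ' : Set S} {ρ ρ' : S → ℝ} {c m m' : ℝ}

lemma DevSetup.finite_setOf_le (hyp : DevSetup S Px A) (hρ : IsDeviabilityDensity ρ) {γ : ℝ}
    (hγ : 0 < γ) : {a ∈ A | γ ≤ ρ a}.Finite :=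
  (hyp.locFin _ (hρ.isCompact_setOf_le hγ)).subset fun _ ha => ⟨ha.2, ha.1⟩

lemma IsMaxBalanced.eq_of_iSup_eq_one (hyp : DevSetup S Px A) (hPL : IsLimitDensity Px PL)
    (hρ : IsDeviabilityDensity ρ) (hρ' : IsDeviabilityDensity ρ') (h : IsMaxBalanced PL A ρ)
    (h' : IsMaxBalanced PL A ρ') (hnorm : ⨆ a ∈ A, ρ a = 1) (hnorm' : ⨆ a ∈ A, ρ' a = 1) {a : S}
    (ha : a ∈ A) : ρ a = ρ' a :=
  have hI := hPL.mem_Icc hyp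
  have hpos : ∀ a ∈ A, ∀ b ∈ A, 0 < PL a b := fun _ ha _ hb => hPL.pos hyp ha hb
  le_antisymm (h.le h' hI hpos hρ.1 hρ'.1 hnorm' (fun _ => hyp.finite_setOf_le hρ') ha)
    (h'.le h hI hpos hρ'.1 hρ.1 hnorm (fun _ => hyp.finite_setOf_le hρ) ha)

/-- The relations between `ρ` and the transition densities that the large deviation limit of a
time-invariant sequence of measures inherits: invariance, as a lower and an upper bound on `ρ`, and
the equality of the flows into and out of a set, as a bound on the first by the second. -/
structure IsStationaryDensity (Px : S → C(ℝ≥0, S) → ℝ) (ρ : S → ℝ) : Prop where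
  isDeviabilityDensity : IsDeviabilityDensity ρ
  mul_transDen_le : ∀ x t y, ρ x * transDen Px x t y ≤ ρ y
  le_of_forall_mul_le : ∀ (t : ℝ≥0) (y : S) (C : Set S) (c : ℝ), IsClosed C → C ∈ 𝓝 y → 0 ≤ c →
    (∀ x, ρ x * ⨆ z ∈ C, transDen Px x t z ≤ c) → ρ y ≤ c
  mul_transDen_le_of_flux_le : ∀ (t : ℝ≥0) (W : Set S) (c : ℝ), IsOpen W → 0 ≤ c →
    (∀ x ∈ closure W, ∀ y ∉ W, ρ x * transDen Px x t y ≤ c) →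
    ∀ a ∉ closure W, ∀ b ∈ W, ρ a * transDen Px a t b ≤ c

namespace IsStationaryDensity

lemma mul_limitDensity_le (hρ : IsStationaryDensity Px ρ) (hPL : IsLimitDensity Px PL) (x y : S) :
    ρ x * PL x y ≤ ρ y :=
  le_of_tendsto' ((hPL x y).const_mul _) fun t => hρ.mul_transDen_le x t y

lemma exists_lt_mul_transDen (hρ : IsStationaryDensity Px ρ) (hyp : DevSetup S Px A) {y : S}
    (hc0 : 0 ≤ c) (hc : c < ρ y) (t : ℝ≥0) : ∃ s ≥ t, ∃ x, c < ρ x * transDen Px x s y := by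
  have hy0 : 0 < ρ y := hc0.trans_lt hc
  obtain ⟨r, hr, hr1⟩ : ∃ r, c / ρ y < r ∧ r < 1 := exists_between ((div_lt_one hy0).2 hc)
  have hr0 : 0 < r := (div_nonneg hc0 hy0.le).trans_lt hr
  obtain ⟨δ, hδ, t₀, t₁, hmove⟩ := hyp.localMove y (1 - r) (sub_pos.2 hr1)
  rw [sub_sub_cancel] at hmove
  by_contra! hle
  have hyc : ρ y ≤ c / r := by
    refine hρ.le_of_forall_mul_le t y (closedBall y (δ / 2)) (c / r) isClosed_closedBall
      (closedBall_mem_nhds y (half_pos hδ)) (div_nonneg hc0 hr0.le) fun x => ?_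
    refine mul_real_biSup_le (hρ.isDeviabilityDensity.nonneg x) (div_nonneg hc0 hr0.le)
      fun z hz => (le_div_iff₀ hr0).2 ?_
    have hback := (hmove z ((mem_closedBall'.1 hz).trans_lt (half_lt_self hδ))).2
    calc ρ x * transDen Px x t z * r ≤ ρ x * (transDen Px x t z * transDen Px z t₁ y) := by
          rw [mul_assoc]
          exact mul_le_mul_of_nonneg_left (mul_le_mul_of_nonneg_left hback.le
            ((hyp.isDeviabilityDensity_transDen x t).nonneg z)) (hρ.isDeviabilityDensity.nonneg x)
      _ ≤ ρ x * transDen Px x (t + t₁) y := mul_le_mul_of_nonneg_left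
          (hyp.transDen_mul_transDen_le x z y t t₁) (hρ.isDeviabilityDensity.nonneg x)
      _ ≤ c := hle (t + t₁) le_self_add x
  exact ((div_lt_comm₀ hy0 hr0).1 hr).not_ge hyc

-- A path that `ρ` charges stays in a superlevel set of `ρ`, hence soon comes close to `A`.
lemma exists_time_mul_transDen_le (hρ : IsStationaryDensity Px ρ) (hyp : DevSetup S Px A)
    (hPL : IsLimitDensity Px PL) (hm0 : 0 ≤ m) (hmm' : m < m') :
    ∃ t₀, ∀ t ≥ t₀, ∀ x y, (∀ a ∈ A, ρ x * PL x a * PL a y ≤ m) → ρ x * transDen Px x t y ≤ m' := by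
  have hρ0 := hρ.isDeviabilityDensity.nonneg
  have hT0 : ∀ x t y, 0 ≤ transDen Px x t y := fun x t =>
    (hyp.isDeviabilityDensity_transDen x t).nonneg
  have hm' : 0 < m' := hm0.trans_lt hmm'
  obtain ⟨r, hr, hr1⟩ : ∃ r, √(m / m') < r ∧ r < 1 :=
    exists_between ((Real.sqrt_lt' one_pos).2 (by rwa [one_pow, div_lt_one hm']))
  have hr0 : 0 < r := (Real.sqrt_nonneg _).trans_lt hr
  have hmr : m < r ^ 2 * m' := (div_lt_iff₀ hm').1 (Real.lt_sq_of_sqrt_lt hr)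
  obtain ⟨δ, hδ, hnear⟩ := hPL.exists_mem_mul_transDen_le hyp hr1
  obtain ⟨t₀, hvisit⟩ := hyp.exists_time_infDist_lt_of_mem
    (hρ.isDeviabilityDensity.isCompact_setOf_le hm') hδ hm'
  refine ⟨t₀, fun t ht x y h => mul_real_biSup_le (hρ0 x) hm'.le fun X (hX : X t = y) => ?_⟩
  by_contra! hlt
  have hPX : m' < Px x X :=
    hlt.trans_le (mul_le_of_le_one_left ((hyp.dev x).nonneg X) (hρ.isDeviabilityDensity.le_one x))
  have hX0 : X 0 = x := hyp.apply_zero_eq (hm'.trans hPX)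
  have hmem : ∀ s ≤ t₀, m' ≤ ρ (X s) := fun s _ => hlt.le.trans
    ((mul_le_mul_of_nonneg_left (hyp.le_transDen x s X) (hρ0 x)).trans (hρ.mul_transDen_le x s _))
  obtain ⟨s, hs, hsA⟩ := hvisit X (by rwa [hX0]) hmem
  obtain ⟨a, ha, hto, hfrom⟩ := hnear (X s) hsA
  refine (h a ha).not_gt (hmr.trans_le ?_)
  calc r ^ 2 * m' ≤ r ^ 2 * (ρ x * (transDen Px x s (X s) * transDen Px (X s) (t - s) y)) :=
        mul_le_mul_of_nonneg_left (hlt.le.trans (mul_le_mul_of_nonneg_left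
          (hX ▸ hyp.le_transDen_mul_transDen x X (hs.trans ht)) (hρ0 x))) (sq_nonneg r)
    _ = ρ x * (transDen Px x s (X s) * r) * (r * transDen Px (X s) (t - s) y) := by ring
    _ ≤ ρ x * PL x a * PL a y :=
        mul_le_mul (mul_le_mul_of_nonneg_left (hto x s) (hρ0 x)) (hfrom y (t - s))
          (mul_nonneg hr0.le (hT0 _ _ _)) (mul_nonneg (hρ0 x) (hPL.mem_Icc hyp x a).1)

lemma eq_maxFluxPt (hρ : IsStationaryDensity Px ρ) (hyp : DevSetup S Px A)
    (hPL : IsLimitDensity Px PL) (y : S) : ρ y = maxFluxPt PL ρ A y := by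
  refine le_antisymm (le_of_not_gt fun hlt => ?_)
    (real_biSup_le (hρ.isDeviabilityDensity.nonneg y) fun a _ => hρ.mul_limitDensity_le hPL a y)
  have hflux0 := (maxFluxPt_mem_Icc (Γ := A) (hPL.mem_Icc hyp) hρ.isDeviabilityDensity.1 y).1
  obtain ⟨c, hc, hcy⟩ := exists_between hlt
  obtain ⟨t₀, ht₀⟩ := hρ.exists_time_mul_transDen_le hyp hPL hflux0 hc
  obtain ⟨t, ht, x, hx⟩ := hρ.exists_lt_mul_transDen hyp (hflux0.trans hc.le) hcy t₀
  refine hx.not_ge (ht₀ t ht x y fun a ha => ?_)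
  exact (mul_le_mul_of_nonneg_right (hρ.mul_limitDensity_le hPL x a) (hPL.mem_Icc hyp a y).1).trans
    (mul_le_maxFluxPt (hPL.mem_Icc hyp) hρ.isDeviabilityDensity.1 ha y)

lemma iSup_mem_eq_one (hρ : IsStationaryDensity Px ρ) (hyp : DevSetup S Px A)
    (hPL : IsLimitDensity Px PL) : ⨆ a ∈ A, ρ a = 1 := by
  have hI := real_biSup_mem_Icc (s := A) hρ.isDeviabilityDensity.1
  refine hI.2.antisymm (hρ.isDeviabilityDensity.2.1 ▸ Real.iSup_le (fun x => ?_) hI.1)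
  rw [hρ.eq_maxFluxPt hyp hPL x]
  exact real_biSup_le hI.1 fun a ha => (mul_le_of_le_one_right
    (hρ.isDeviabilityDensity.nonneg a) (hPL.mem_Icc hyp a x).2).trans
      (le_real_biSup (fun a _ => hρ.isDeviabilityDensity.le_one a) ha)

lemma mul_iSup_le_of_le_maxFluxPt (hρ : IsStationaryDensity Px ρ) (hyp : DevSetup S Px (Γ ∪ Γ'))
    (hPL : IsLimitDensity Px PL) (hc : maxFlux PL ρ Γ' Γ < c) (hcΓ : c < maxFlux PL ρ Γ Γ') {x : S}
    (hx : c ≤ maxFluxPt PL ρ Γ' x) :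
    ρ x * ⨆ a ∈ Γ, PL x a ≤ maxFlux PL ρ Γ Γ' * maxFlux PL ρ Γ' Γ / c := by
  have hI := hPL.mem_Icc hyp
  have hρI := hρ.isDeviabilityDensity.1
  have hΓ := hPL.maxFluxPt_mul_iSup_le hyp hρI Γ Γ' x
  have hΓ' := hPL.maxFluxPt_mul_iSup_le hyp hρI Γ' Γ x
  have hc0 : 0 < c := (maxFlux_nonneg hI hρI).trans_lt hc
  have hback0 : 0 ≤ maxFlux PL ρ Γ' Γ := maxFlux_nonneg hI hρI
  have hu0 : 0 ≤ ⨆ a ∈ Γ, PL x a := (real_biSup_mem_Icc (hI x)).1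
  have hu : ⨆ a ∈ Γ, PL x a ≤ maxFlux PL ρ Γ' Γ / c :=
    (le_div_iff₀' hc0).2 ((mul_le_mul_of_nonneg_right hx hu0).trans hΓ')
  have hone : ⨆ a ∈ Γ', PL x a = 1 := by
    have hmax := hPL.iSup_mem_eq_one hyp x
    rw [real_biSup_union (fun a _ => (hI x a).1) (fun a _ => (hI x a).1) (fun a _ => (hI x a).2)
      fun a _ => (hI x a).2] at hmax
    exact (max_eq_iff.1 hmax).resolve_left (fun h => (hu.trans_lt ((div_lt_one hc0).2 hc)).ne h.1)
      |>.1
  rw [hone, mul_one] at hΓ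
  have hρx : ρ x = max (maxFluxPt PL ρ Γ x) (maxFluxPt PL ρ Γ' x) :=
    (hρ.eq_maxFluxPt hyp hPL x).trans (real_biSup_union
      (fun a _ => mul_nonneg (hρI a).1 (hI a x).1) (fun a _ => mul_nonneg (hρI a).1 (hI a x).1)
      (fun a _ => mul_le_one₀ (hρI a).2 (hI a x).1 (hI a x).2)
      fun a _ => mul_le_one₀ (hρI a).2 (hI a x).1 (hI a x).2)
  rw [hρx, max_mul_of_nonneg _ _ hu0, mul_div_assoc]
  refine max_le (mul_le_mul hΓ hu hu0 ((maxFluxPt_mem_Icc hI hρI x).1.trans hΓ)) (hΓ'.trans ?_)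
  rw [← mul_div_assoc, le_div_iff₀ hc0, mul_comm]
  exact mul_le_mul_of_nonneg_right hcΓ.le hback0

lemma mul_mul_le_max (hρ : IsStationaryDensity Px ρ) (hyp : DevSetup S Px (Γ ∪ Γ'))
    (hPL : IsLimitDensity Px PL) (hc : maxFlux PL ρ Γ' Γ < c) (hcΓ : c < maxFlux PL ρ Γ Γ')
    {x y a : S} (hx : c ≤ maxFluxPt PL ρ Γ' x) (hy : maxFluxPt PL ρ Γ' y ≤ c) (ha : a ∈ Γ ∪ Γ') :
    ρ x * PL x a * PL a y ≤ max (maxFlux PL ρ Γ Γ' * maxFlux PL ρ Γ' Γ / c) c := by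
  have hI := hPL.mem_Icc hyp
  have hρI := hρ.isDeviabilityDensity.1
  rcases ha with ha | ha
  · calc ρ x * PL x a * PL a y ≤ ρ x * PL x a :=
          mul_le_of_le_one_right (mul_nonneg (hρI x).1 (hI x a).1) (hI a y).2
      _ ≤ ρ x * ⨆ a ∈ Γ, PL x a := mul_le_mul_of_nonneg_left
          (le_real_biSup (fun a _ => (hI x a).2) ha) (hρI x).1
      _ ≤ _ := le_max_of_le_left (hρ.mul_iSup_le_of_le_maxFluxPt hyp hPL hc hcΓ hx)
  · calc ρ x * PL x a * PL a y ≤ ρ a * PL a y :=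
          mul_le_mul_of_nonneg_right (hρ.mul_limitDensity_le hPL x a) (hI a y).1
      _ ≤ maxFluxPt PL ρ Γ' y := mul_le_maxFluxPt hI hρI ha y
      _ ≤ _ := le_max_of_le_right hy

-- If the flux out of `Γ` were larger, some level `c` of the flux from `Γ'` would lie strictly
-- between the two; the open set above this level contains the part of `Γ'` that matters, and little
-- flows out of it.
lemma maxFlux_le_maxFlux_swap (hρ : IsStationaryDensity Px ρ) (hyp : DevSetup S Px (Γ ∪ Γ'))
    (hPL : IsLimitDensity Px PL) : maxFlux PL ρ Γ Γ' ≤ maxFlux PL ρ Γ' Γ := by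
  have hI := hPL.mem_Icc hyp
  have hρI := hρ.isDeviabilityDensity.1
  by_contra! hlt
  obtain ⟨c, hc, hcΓ⟩ := exists_between hlt
  have hc0 : 0 < c := (maxFlux_nonneg hI hρI).trans_lt hc
  have hmax : max (maxFlux PL ρ Γ Γ' * maxFlux PL ρ Γ' Γ / c) c < maxFlux PL ρ Γ Γ' :=
    max_lt ((div_lt_iff₀ hc0).2 (mul_lt_mul_of_pos_left hc (hc0.trans hcΓ))) hcΓ
  obtain ⟨B, hB, hBΓ⟩ := exists_between hmax
  have hcB : c < B := (le_max_right _ _).trans_lt hB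
  obtain ⟨t₀, ht₀⟩ := hρ.exists_time_mul_transDen_le hyp hPL (hc0.le.trans (le_max_right _ _)) hB
  have hψ : Continuous (maxFluxPt PL ρ Γ') := hPL.continuous_maxFluxPt hyp hρI Γ'
  have hclosure : ∀ x ∈ closure {x | c < maxFluxPt PL ρ Γ' x}, c ≤ maxFluxPt PL ρ Γ' x :=
    fun _ hx => closure_lt_subset_le continuous_const hψ hx
  refine hBΓ.not_ge (maxFlux_le hρI (hc0.trans hcB).le fun a ha b hb => ?_)
  have haψ : maxFluxPt PL ρ Γ' a < c :=
    (real_biSup_le (maxFlux_nonneg hI hρI) fun _ h => mul_le_maxFlux hI hρI h ha).trans_lt hc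
  rcases le_or_gt (maxFluxPt PL ρ Γ' b) c with hbψ | hbψ
  · calc ρ a * PL a b ≤ ρ b * PL b b := by
          rw [hPL.self_eq_one hyp (Or.inr hb), mul_one]
          exact hρ.mul_limitDensity_le hPL a b
      _ ≤ maxFluxPt PL ρ Γ' b := mul_le_maxFluxPt hI hρI hb b
      _ ≤ B := hbψ.trans hcB.le
  · refine le_of_tendsto ((hPL a b).const_mul (ρ a)) (eventually_atTop.2 ⟨t₀, fun t ht => ?_⟩)
    exact hρ.mul_transDen_le_of_flux_le t _ B (isOpen_lt continuous_const hψ) (hc0.trans hcB).le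
      (fun x hx y hy => ht₀ t ht x y fun _ => hρ.mul_mul_le_max hyp hPL hc hcΓ (hclosure x hx)
        (not_lt.1 hy)) a (fun h => haψ.not_ge (hclosure a h)) b hbψ

lemma isMaxBalanced (hρ : IsStationaryDensity Px ρ) (hyp : DevSetup S Px A)
    (hPL : IsLimitDensity Px PL) : IsMaxBalanced PL A ρ := fun A' A'' _ _ _ hA =>
  (hρ.maxFlux_le_maxFlux_swap (hA ▸ hyp) hPL).antisymm
    (hρ.maxFlux_le_maxFlux_swap (union_comm A' A'' ▸ hA ▸ hyp) hPL)

lemma unique (hρ : IsStationaryDensity Px ρ) (hρ' : IsStationaryDensity Px ρ')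
    (hyp : DevSetup S Px A) (hPL : IsLimitDensity Px PL) : ρ = ρ' := by
  have hA : ∀ a ∈ A, ρ a = ρ' a := fun a => IsMaxBalanced.eq_of_iSup_eq_one hyp hPL
    hρ.isDeviabilityDensity hρ'.isDeviabilityDensity (hρ.isMaxBalanced hyp hPL)
    (hρ'.isMaxBalanced hyp hPL) (hρ.iSup_mem_eq_one hyp hPL) (hρ'.iSup_mem_eq_one hyp hPL)
  funext x
  rw [hρ.eq_maxFluxPt hyp hPL x, hρ'.eq_maxFluxPt hyp hPL x]
  exact iSup_congr fun a => iSup_congr fun ha => by rw [hA a ha]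

end IsStationaryDensity

end StationaryDensity

section TransitionKernels

open ProbabilityTheory

lemma invariant_map_iff {E F : Type*} [MeasurableSpace E] [MeasurableSpace F] {μ : Measure E}
    {κ : Kernel E F} {f : F → E} (hf : Measurable f) :
    (κ.map f).Invariant μ ↔
      ∀ B, MeasurableSet B → ∫⁻ x, κ x (f ⁻¹' B) ∂μ = μ B := by
  have hbind : ∀ B, MeasurableSet B → μ.bind (κ.map f) B = ∫⁻ x, κ x (f ⁻¹' B) ∂μ := fun B hB => by
    rw [Measure.bind_apply hB (κ.map f).aemeasurable]
    exact lintegral_congr fun x => Kernel.map_apply' κ hf x hB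
  rw [Kernel.Invariant, Measure.ext_iff]
  exact forall₂_congr fun B hB => by rw [hbind B hB]

variable [MeasurableSpace S] [BorelSpace S] {Px : S → C(ℝ≥0, S) → ℝ} {A : Set S}

lemma DevSetup.kernelLDConv_eval [MeasurableSpace C(ℝ≥0, S)] [BorelSpace C(ℝ≥0, S)]
    (hyp : DevSetup S Px A) {K : ℕ → Kernel S C(ℝ≥0, S)} (hK : KernelLDConv K Px) (t : ℝ≥0) :
    KernelLDConv (fun n => (K n).map fun X => X t) fun x => transDen Px x t :=
  hK.map hyp.dev (continuous_eval_const t)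

variable {Q : ℝ≥0 → ℕ → Kernel S S} [∀ t n, IsMarkovKernel (Q t n)] {P : ℕ → Measure S}
  [∀ n, IsProbabilityMeasure (P n)] {U : Ultrafilter ℕ}

lemma DevSetup.isStationaryDensity_localRate (hyp : DevSetup S Px A)
    (hQ : ∀ t, KernelLDConv (Q t) fun x => transDen Px x t)
    (hinv : ∀ t n, (Q t n).Invariant (P n)) (hP : IsExpTight atTop P)
    (hU : (U : Filter ℕ) ≤ atTop) : IsStationaryDensity Px (localRate U P) :=
  have hT := fun t x => hyp.isDeviabilityDensity_transDen x t
  have hPU := hP.mono hU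
  { isDeviabilityDensity := hPU.isDeviabilityDensity_localRate hU
    mul_transDen_le := fun x t y => (hQ t).localRate_mul_le hU (hT t) (hinv t) x y
    le_of_forall_mul_le := fun t _ _ _ hC hyC =>
      (hQ t).localRate_le_of_forall_mul_le hU hPU (hT t) (hinv t) hC hyC
    mul_transDen_le_of_flux_le := fun t _ _ hW hc0 hc _ ha _ hb =>
      (hQ t).localRate_mul_le_of_flux_le hU hPU (hT t) (hinv t) hW hc0 hc ha hb }

end TransitionKernels

theorem stmt17_general [MeasurableSpace S] [BorelSpace S] {Px : S → C(ℝ≥0, S) → ℝ} {A : Set S}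
    (hyp : DevSetup S Px A) {PL : S → S → ℝ} (hPL : IsLimitDensity Px PL)
    (Q : ℝ≥0 → ℕ → ProbabilityTheory.Kernel S S)
    [∀ t n, ProbabilityTheory.IsMarkovKernel (Q t n)]
    (hQ : ∀ t, KernelLDConv (Q t) fun x => transDen Px x t)
    (P : ℕ → Measure S) [∀ n, IsProbabilityMeasure (P n)]
    (hinv : ∀ t n, (Q t n).Invariant (P n))
    (htight : ∀ ε : ℝ, 0 < ε → ∃ Kc : Set S, IsCompact Kc ∧
      Filter.limsup (fun n => ((P n) Kcᶜ).toReal ^ ((n : ℝ)⁻¹)) atTop < ε) :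
    ∃ ρ : S → ℝ, IsDeviabilityDensity ρ ∧
      IsMaxBalanced PL A ρ ∧
      (⨆ a ∈ A, ρ a) = 1 ∧
      (∀ ρ' : S → ℝ, IsDeviabilityDensity ρ' → IsMaxBalanced PL A ρ' →
        (⨆ a ∈ A, ρ' a) = 1 → ∀ a ∈ A, ρ' a = ρ a) ∧
      (∀ x : S, ρ x = maxFluxPt PL ρ A x) ∧
      LDConv P (fun n => n) ρ := by
  have hP : IsExpTight atTop P := isExpTight_of_limsup_lt htight
  have hstat : ∀ U : Ultrafilter ℕ, (U : Filter ℕ) ≤ atTop →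
      IsStationaryDensity Px (localRate U P) :=
    fun U => hyp.isStationaryDensity_localRate hQ hinv hP
  have hρ := hstat (hyperfilter ℕ) Nat.hyperfilter_le_atTop
  have hdev := hρ.isDeviabilityDensity
  have hbal := hρ.isMaxBalanced hyp hPL
  have hnorm := hρ.iSup_mem_eq_one hyp hPL
  exact ⟨localRate (hyperfilter ℕ) P, hdev, hbal, hnorm,
    fun ρ' hdev' hbal' hnorm' a ha =>
      hbal'.eq_of_iSup_eq_one hyp hPL hdev' hdev hbal hnorm' hnorm ha,
    hρ.eq_maxFluxPt hyp hPL,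
    hP.ldConv_of_localRate_eq fun U hU => (hstat U hU).unique hρ hyp hPL⟩

theorem stmt17 [MeasurableSpace S] [BorelSpace S]
    [MeasurableSpace C(ℝ≥0, S)] [BorelSpace C(ℝ≥0, S)]
    (Px : S → C(ℝ≥0, S) → ℝ) (A : Set S) (hyp : DevSetup S Px A)
    (PL : S → S → ℝ)
    (hPL : ∀ x y : S, Tendsto (fun t : ℝ≥0 => transDen Px x t y) atTop (𝓝 (PL x y)))
    (K : ℕ → ProbabilityTheory.Kernel S C(ℝ≥0, S))
    (hK : ∀ n, ProbabilityTheory.IsMarkovKernel (K n))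
    (hK0 : ∀ n (x : S), K n x {X : C(ℝ≥0, S) | X 0 = x} = 1)
    (hKLD : ∀ (x : S) (xs : ℕ → S), Tendsto xs atTop (𝓝 x) →
      LDConv (fun n => K n (xs n)) (fun n => n) (Px x))
    (P : ℕ → Measure S) (hP : ∀ n, IsProbabilityMeasure (P n))
    (hinv : ∀ n (t : ℝ≥0) (Γ : Set S), MeasurableSet Γ →
      (∫⁻ x, K n x {X : C(ℝ≥0, S) | X t ∈ Γ} ∂(P n)) = P n Γ)
    (htight : ∀ ε : ℝ, 0 < ε → ∃ Kc : Set S, IsCompact Kc ∧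
      Filter.limsup (fun n => ((P n) Kcᶜ).toReal ^ ((n : ℝ)⁻¹)) atTop < ε) :
    ∃ ρ : S → ℝ, IsDeviabilityDensity ρ ∧
      (∀ A' A'' : Set S, A'.Nonempty → A''.Nonempty → Disjoint A' A'' → A' ∪ A'' = A →
        maxFlux PL ρ A' A'' = maxFlux PL ρ A'' A') ∧
      (⨆ a ∈ A, ρ a) = 1 ∧
      (∀ ρ' : S → ℝ, IsDeviabilityDensity ρ' →
        (∀ A' A'' : Set S, A'.Nonempty → A''.Nonempty → Disjoint A' A'' → A' ∪ A'' = A →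
          maxFlux PL ρ' A' A'' = maxFlux PL ρ' A'' A') →
        (⨆ a ∈ A, ρ' a) = 1 → ∀ a ∈ A, ρ' a = ρ a) ∧
      (∀ x : S, ρ x = ⨆ a ∈ A, ρ a * PL a x) ∧
      LDConv P (fun n => n) ρ := by
  have hev (t : ℝ≥0) : Measurable fun X : C(ℝ≥0, S) => X t := (continuous_eval_const t).measurable
  have (t : ℝ≥0) (n : ℕ) := ProbabilityTheory.Kernel.IsMarkovKernel.map (K n) (hev t)
  exact stmt17_general hyp hPL (fun t n => (K n).map fun X => X t) (hyp.kernelLDConv_eval hKLD) P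
    (fun t n => (invariant_map_iff (hev t)).2 (hinv n t)) htight
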